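/- For every oracle machine M, the measure of the class of X ∈ 2^ω such that M(X) is total and is the characteristic function of a cofinite subset of ℕ is not a 3-random real number. Likewise, for every monotone machine N, the measure of the class of X such that N(X) is a stream of the form σ∗1^ω (and similarly, such that N(X) is a computable stream) is not 3-random. -/

import Mathlib

open scoped Classical
open MeasureTheory

namespace RandProb

/-- Cantor space: the space of infinite binary sequences. -/
abbrev Cantor := ℕ → Bool

/-! ### Oracle partial recursive functions, via codes -/

/-- Codes for partial recursive functions with access to an oracle `O : ℕ → ℕ`.
These codes play the role of (oracle) Turing machines. -/
inductive CodeO : Type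
  | zero : CodeO
  | succ : CodeO
  | left : CodeO
  | right : CodeO
  | oracle : CodeO
  | pair : CodeO → CodeO → CodeO
  | comp : CodeO → CodeO → CodeO
  | prec : CodeO → CodeO → CodeO
  | rfind' : CodeO → CodeO

/-- Evaluation of an oracle code with (total) oracle `O`. -/
def CodeO.eval (O : ℕ → ℕ) : CodeO → ℕ →. ℕ
  | .zero => pure 0
  | .succ => Nat.succ
  | .left => ↑fun n : ℕ => n.unpair.1
  | .right => ↑fun n : ℕ => n.unpair.2
  | .oracle => ↑fun n : ℕ => O n
  | .pair cf cg => fun n => Nat.pair <$> cf.eval O n <*> cg.eval O n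
  | .comp cf cg => fun n => cg.eval O n >>= cf.eval O
  | .prec cf cg =>
    Nat.unpaired fun a n =>
      n.rec (cf.eval O a) fun y IH => do
        let i ← IH
        cg.eval O (Nat.pair a (Nat.pair y i))
  | .rfind' cf =>
    Nat.unpaired fun a m =>
      (Nat.rfind fun n => (fun m => m = 0) <$> cf.eval O (Nat.pair a (n + m))).map (· + m)

/-- A canonical injective numbering of oracle codes. -/
def CodeO.encode : CodeO → ℕ
  | .zero => 0
  | .succ => 1
  | .left => 2
  | .right => 3
  | .oracle => 4
  | .pair cf cg => 2 * (2 * Nat.pair cf.encode cg.encode) + 5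
  | .comp cf cg => 2 * (2 * Nat.pair cf.encode cg.encode + 1) + 5
  | .prec cf cg => 2 * (2 * Nat.pair cf.encode cg.encode) + 6
  | .rfind' cf => 2 * (2 * cf.encode + 1) + 6

/-- The Turing jump of an oracle: the halting problem relative to `O`,
as a `{0,1}`-valued function. -/
noncomputable def jump (O : ℕ → ℕ) : ℕ → ℕ := fun e =>
  if ∃ c : CodeO, c.encode = e ∧ (c.eval O e).Dom then 1 else 0

/-- `iterJump n` is `∅^(n)`, the `n`-th iterate of the halting problem (as an oracle). -/
noncomputable def iterJump : ℕ → ℕ → ℕ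
  | 0 => fun _ => 0
  | n + 1 => jump (iterJump n)

/-- `S ⊆ ℕ` is computably enumerable relative to the oracle `O`. -/
def CeIn (O : ℕ → ℕ) (S : Set ℕ) : Prop := ∃ c : CodeO, S = {m | (c.eval O m).Dom}

/-- The left Dedekind cut of `α` (as a set of codes of rationals) is c.e. in `O`. -/
def LeftCeIn (O : ℕ → ℕ) (α : ℝ) : Prop :=
  CeIn O {m | ∃ q : ℚ, Encodable.encode q = m ∧ (q : ℝ) < α}

/-- The right Dedekind cut of `α` (as a set of codes of rationals) is c.e. in `O`. -/
def RightCeIn (O : ℕ → ℕ) (α : ℝ) : Prop :=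
  CeIn O {m | ∃ q : ℚ, Encodable.encode q = m ∧ α < (q : ℝ)}

/-! ### Martin-Löf randomness for real numbers -/

/-- The `i`-th component of a Martin-Löf test coded by the set `W ⊆ ℕ`:
the union of all open rational intervals whose codes are enumerated into the
`i`-th section of `W`. -/
def testSet (W : Set ℕ) (i : ℕ) : Set ℝ :=
  {x | ∃ p q : ℚ, Nat.pair i (Encodable.encode (p, q)) ∈ W ∧ (p : ℝ) < x ∧ x < (q : ℝ)}

/-- `α` is Martin-Löf random relative to the oracle `O`. -/
def MLRandomIn (O : ℕ → ℕ) (α : ℝ) : Prop :=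
  ∀ W : Set ℕ, CeIn O W →
    (∀ i, volume (testSet W i) ≤ ENNReal.ofReal ((2 : ℝ)⁻¹ ^ i)) →
    ∃ i, α ∉ testSet W i

/-- `α` is `n`-random: Martin-Löf random relative to `∅^(n-1)`. -/
def NRandom (n : ℕ) (α : ℝ) : Prop := MLRandomIn (iterJump (n - 1)) α

/-! ### The uniform measure on Cantor space -/

/-- The binary digits of a real number (meaningful on `[0,1)`). -/
noncomputable def digits (x : ℝ) : Cantor := fun n => decide (⌊x * 2 ^ (n + 1)⌋ % 2 = 1)

/-- The uniform (Lebesgue) product measure on Cantor space, obtained as the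
pushforward of Lebesgue measure on `[0,1)` under the binary-digit map. -/
noncomputable def mu : Measure Cantor :=
  Measure.map digits (volume.restrict (Set.Ico (0 : ℝ) 1))

/-- The uniform measure of a set of elements of Cantor space, as a real number. -/
noncomputable def muR (S : Set Cantor) : ℝ := (mu S).toReal

/-! ### Strings, prefixes and cylinders -/

/-- The length-`n` initial segment of `X ∈ 2^ω`, as a finite binary string. -/
def initSeg (X : Cantor) (n : ℕ) : List Bool := (List.range n).map X

/-- `⟦S⟧`: the elements of Cantor space having a prefix in the set of strings `S`. -/
def cyl (S : Set (List Bool)) : Set Cantor := {X | ∃ n, initSeg X n ∈ S}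

/-- A set of strings is prefix-free if none of its elements properly extends another. -/
def IsPrefixFree (S : Set (List Bool)) : Prop := ∀ σ ∈ S, ∀ τ ∈ S, σ <+: τ → σ = τ

/-- A set of strings is upward closed if it is closed under taking extensions. -/
def UpClosed (S : Set (List Bool)) : Prop := ∀ σ ∈ S, ∀ τ, σ <+: τ → τ ∈ S

/-- Two strings are compatible if one is a prefix of the other. -/
def Compatible (σ τ : List Bool) : Prop := σ <+: τ ∨ τ <+: σ

/-! ### Oracle machines -/

/-- An element of Cantor space viewed as a `{0,1}`-valued oracle. -/
def oX (X : Cantor) : ℕ → ℕ := fun n => cond (X n) 1 0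

/-- `evalO X c n`: the (possibly divergent) output of the oracle machine `c`
on input `n` with oracle `X`. -/
def evalO (X : Cantor) (c : CodeO) (n : ℕ) : Part ℕ := c.eval (oX X) n

/-- The oracle obtained by writing the string `ρ` before the bits of `X`. -/
def prepend (ρ : List Bool) (X : Cantor) : Cantor := fun n =>
  if n < ρ.length then ρ.getD n false else X (n - ρ.length)

/-- `X ∈ 2^ω` extends the finite string `ρ`. -/
def Extends (X : Cantor) (ρ : List Bool) : Prop := initSeg X ρ.length = ρ

/-- `u` is a universal oracle machine: some effective, prefix-free translation
`c ↦ σ_c` satisfies `u(σ_c * X, n) ≃ c(X, n)` for all machines `c`. -/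
def UniversalOM (u : CodeO) : Prop :=
  ∃ σ : CodeO → List Bool,
    (∃ f : ℕ → ℕ, Computable f ∧ ∀ c : CodeO, f c.encode = Encodable.encode (σ c)) ∧
    IsPrefixFree (Set.range σ) ∧
    ∀ (c : CodeO) (X : Cantor) (n : ℕ), evalO (prepend (σ c) X) u n = evalO X c n

/-- `TOT(c)`: the oracles `X` such that the function `c(X)` is total. -/
def TOT (c : CodeO) : Set Cantor := {X | ∀ n, (evalO X c n).Dom}

/-- The domain of the partial function `c(X)`. -/
def domSet (c : CodeO) (X : Cantor) : Set ℕ := {n | (evalO X c n).Dom}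

/-- The range of the partial function `c(X)`. -/
def ranSet (c : CodeO) (X : Cantor) : Set ℕ := {v | ∃ n, v ∈ evalO X c n}

/-- `INF(c)`: the oracles `X` such that `c(X)` has infinite domain. -/
def INF (c : CodeO) : Set Cantor := {X | (domSet c X).Infinite}

/-- `COF(c)`: the oracles `X` such that `c(X)` has cofinite domain. -/
def COF (c : CodeO) : Set Cantor := {X | (domSet c X)ᶜ.Finite}

/-- `COM(c)`: the oracles `X` such that `c(X)` has computable domain. -/
def COM (c : CodeO) : Set Cantor := {X | ComputablePred fun n => n ∈ domSet c X}

/-- The characteristic function of a set of naturals. -/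
noncomputable def chi (A : Set ℕ) : ℕ → ℕ := fun n => if n ∈ A then 1 else 0

/-- Turing reducibility between sets of naturals. -/
def TuringLEs (B A : Set ℕ) : Prop := ∃ c : CodeO, ∀ n, c.eval (chi A) n = Part.some (chi B n)

/-- The halting problem `∅'` as a set of naturals. -/
noncomputable def HaltingSet : Set ℕ := {e | iterJump 1 e = 1}

/-- `COMPL(c)`: the oracles `X` such that the domain of `c(X)` computes the halting problem. -/
noncomputable def COMPL (c : CodeO) : Set Cantor := {X | TuringLEs HaltingSet (domSet c X)}

/-- Turing reducibility between total functions on ℕ. -/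
def TuringLEf (f g : ℕ → ℕ) : Prop := ∃ c : CodeO, ∀ n, c.eval g n = Part.some (f n)

/-- A real number viewed as an oracle, via its binary expansion. -/
noncomputable def realOracle (α : ℝ) : ℕ → ℕ := oX (digits α)

/-- Two reals have Turing-incomparable degrees. -/
noncomputable def TIncompReal (α β : ℝ) : Prop :=
  ¬ TuringLEf (realOracle α) (realOracle β) ∧ ¬ TuringLEf (realOracle β) (realOracle α)

/-! ### Arithmetical hierarchy -/

/-- Evaluation with the trivial (empty) oracle: ordinary partial recursion. -/
def eval0 (c : CodeO) : ℕ →. ℕ := c.eval fun _ => 0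

/-- `SigmaNumIdx n c` is the `Σ^0_{n+1}` subset of `ℕ` with index `c`. -/
def SigmaNumIdx : ℕ → CodeO → Set ℕ
  | 0, c => {m | (eval0 c m).Dom}
  | n + 1, c => {m | ∃ k, Nat.pair m k ∉ SigmaNumIdx n c}

/-- `S ⊆ ℕ` is `Σ^0_n` (intended for `n ≥ 1`). -/
def SigmaN (n : ℕ) (S : Set ℕ) : Prop := ∃ c : CodeO, S = SigmaNumIdx (n - 1) c

/-- The set of codes of the elements of a set of binary strings. -/
def strCodes (S : Set (List Bool)) : Set ℕ := {m | ∃ σ ∈ S, Encodable.encode σ = m}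

/-- A set of binary strings is `Σ^0_n`. -/
def SigmaStr (n : ℕ) (S : Set (List Bool)) : Prop := SigmaN n (strCodes S)

/-- A set of binary strings is `Π^0_n`: its complement is `Σ^0_n`. -/
def PiStr (n : ℕ) (S : Set (List Bool)) : Prop := SigmaStr n Sᶜ

/-- A set of binary strings is c.e. relative to the oracle `O`. -/
def CeStrIn (O : ℕ → ℕ) (S : Set (List Bool)) : Prop := CeIn O (strCodes S)

/-- `SigmaClassIdx n c m` is the `Σ^0_{n+1}` class of elements of Cantor space
with index `c` and parameter `m`. -/
def SigmaClassIdx : ℕ → CodeO → ℕ → Set Cantor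
  | 0, c, m => {X | (evalO X c m).Dom}
  | n + 1, c, m => {X | ∃ k, X ∉ SigmaClassIdx n c (Nat.pair m k)}

/-! ### Monotone machines -/

/-- A monotone machine: a partial computable, monotone map on finite binary strings. -/
structure MonoMachine where
  f : List Bool →. List Bool
  partrec : Partrec f
  mono : ∀ ⦃σ τ a b : List Bool⦄, σ <+: τ → a ∈ f σ → b ∈ f τ → a <+: b

/-- The oracles `X` such that the output of the monotone machine on `X` is infinite. -/
def MonoINF (M : MonoMachine) : Set Cantor :=
  {X | ∀ k, ∃ n a, a ∈ M.f (initSeg X n) ∧ k ≤ a.length}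

/-- The `k`-th bit of the output `M(X)` of a monotone machine is `b`. -/
def MonoMachine.hasBit (M : MonoMachine) (X : Cantor) (k : ℕ) (b : Bool) : Prop :=
  ∃ n a, a ∈ M.f (initSeg X n) ∧ a[k]? = some b

/-- `U` is a universal monotone machine. -/
def UniversalMono (U : MonoMachine) : Prop :=
  ∃ (M : ℕ → MonoMachine) (σ : ℕ → List Bool),
    Partrec₂ (fun (e : ℕ) (τ : List Bool) => (M e).f τ) ∧
    (∀ V : MonoMachine, ∃ e, (M e).f = V.f) ∧
    Computable σ ∧ IsPrefixFree (Set.range σ) ∧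
    ∀ e τ, U.f (σ e ++ τ) = (M e).f τ

/-! ### Infinitary self-delimiting machines -/

/-- Chaitin's infinitary self-delimiting machines: `f σ n` is the `n`-th approximation
of the output on program `σ` (`none` meaning divergence); the convergence relation is
decidable, approximations are monotone, and machines are self-delimiting. -/
structure InfMachine where
  f : List Bool → ℕ → Option (List Bool)
  computable : Computable₂ f
  mono : ∀ σ m n a, n < m → f σ m = some a → ∃ b, f σ n = some b ∧ b <+: a
  sd : ∀ σ τ n a, f σ n = some a → f (σ ++ τ) n = some a

/-- `M^∞(σ)↓`: all approximations converge. -/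
def InfMachine.domInf (M : InfMachine) (σ : List Bool) : Prop := ∀ n, M.f σ n ≠ none

/-- The domain of `M^∞`. -/
def InfMachine.DOM (M : InfMachine) : Set (List Bool) := {σ | M.domInf σ}

/-- The output `M^∞(σ)` is infinite (a stream). -/
def InfMachine.outInf (M : InfMachine) (σ : List Bool) : Prop :=
  ∀ k, ∃ n a, M.f σ n = some a ∧ k ≤ a.length

/-- `FIN(M^∞)`: programs in the domain with finite output. -/
def InfMachine.FIN (M : InfMachine) : Set (List Bool) := {σ | M.domInf σ ∧ ¬ M.outInf σ}

/-- `INF(M^∞)`: programs in the domain with infinite output. -/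
def InfMachine.INF (M : InfMachine) : Set (List Bool) := {σ | M.domInf σ ∧ M.outInf σ}

/-- The `k`-th bit of the output `M^∞(σ)` is `b`. -/
def InfMachine.hasBit (M : InfMachine) (σ : List Bool) (k : ℕ) (b : Bool) : Prop :=
  ∃ n a, M.f σ n = some a ∧ a[k]? = some b

/-- The domain of the prefix-free machine `M^*`: minimal strings in the domain of `M^∞`. -/
def InfMachine.DOMstar (M : InfMachine) : Set (List Bool) :=
  {σ | M.domInf σ ∧ ∀ τ, τ <+: σ → τ ≠ σ → ¬ M.domInf τ}

/-- Programs whose output is a stream with a tail of 1s. -/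
def InfMachine.COFout (M : InfMachine) : Set (List Bool) :=
  {σ | M.domInf σ ∧ M.outInf σ ∧ ∃ t, ∀ k, t ≤ k → M.hasBit σ k true}

/-- `A^∞(σ) ≃ B^∞(τ)`: both converge or both diverge, with equal outputs. -/
def InfAgree (A : InfMachine) (σ : List Bool) (B : InfMachine) (τ : List Bool) : Prop :=
  (A.domInf σ ↔ B.domInf τ) ∧ (A.domInf σ → ∀ k b, (A.hasBit σ k b ↔ B.hasBit τ k b))

/-- `U` is a universal infinitary self-delimiting machine. -/
def UniversalInf (U : InfMachine) : Prop :=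
  ∃ (M : ℕ → InfMachine) (σ : ℕ → List Bool),
    Computable (fun p : ℕ × List Bool × ℕ => (M p.1).f p.2.1 p.2.2) ∧
    (∀ V : InfMachine, ∃ e, ∀ τ, InfAgree (M e) τ V τ) ∧
    Computable σ ∧ IsPrefixFree (Set.range σ) ∧
    ∀ e τ, InfAgree U (σ e ++ τ) (M e) τ

end RandProb

/-!
Both kinds of machines compute functionals `Φ` on Cantor space that are given by an enumerable set
of axioms saying that inputs extending `σ` have outputs extending `τ`. A real `β - γ`, where the
right cuts of `β` and `γ` are `Σ₂`, has both cuts enumerable in `∅''`; the short intervals around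
it with endpoints in the two cuts form a test, so that it is not 3-random. Each of the three
probabilities is such a difference.

The probability `mass τ` that the output of `Φ` extends `τ` is uniformly left-c.e., and the measure
of the domain of `Φ` (the inputs with infinite output) is the decreasing limit of
`∑_{|τ| = m} mass τ`, so its right cut is `Σ₂`. The output is eventually `1` on exactly those
inputs in the domain of `Φ` that are not in the domain of the functional that copies only the zeros
of the output of `Φ`.

A stream that is the output with positive probability is computable: above a sufficiently long
initial segment, it is the only path of large mass. As there are only countably many computable
streams, the outputs are computable, up to a null set, on the complement in the domain of the
diffuse part, which consists of the inputs whose output has probability zero. Its measure is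
`inf_k lim_m ∑_{|τ| = m} min (mass τ) (2 ^ -k)`, which has a `Σ₂` right cut as well.
-/

namespace RandProb

open Filter Topology

/-! ### Recursively enumerable predicates -/

section

variable {α β : Type*} [Primcodable α] [Primcodable β]

theorem exists_stages_of_rePred {p : α → Prop} (hp : REPred p) :
    ∃ D : α → ℕ → Prop, PrimrecRel D ∧ (∀ a, Monotone (D a)) ∧ ∀ a, p a ↔ ∃ s, D a s := by
  obtain ⟨c, hc⟩ := Nat.Partrec.Code.exists_code.1 hp
  refine ⟨fun a s => (Nat.Partrec.Code.evaln s c (Encodable.encode a)).isSome, ?_, ?_, ?_⟩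
  · exact Primrec.primrecPred <| (Primrec.option_isSome.comp (Nat.Partrec.Code.primrec_evaln.comp
      ((Primrec.snd.pair (Primrec.const c)).pair (Primrec.encode.comp Primrec.fst)))).of_eq
      fun _ => (Bool.decide_coe _).symm
  · intro a s t hst h
    obtain ⟨y, hy⟩ := Option.isSome_iff_exists.1 h
    exact Option.isSome_iff_exists.2 ⟨y, Nat.Partrec.Code.evaln_mono hst hy⟩
  · intro a
    have hdom : p a ↔ (Nat.Partrec.Code.eval c (Encodable.encode a)).Dom := by
      simp [hc, Part.dom_iff_mem]
    simp only [hdom, Part.dom_iff_mem, Nat.Partrec.Code.evaln_complete, Option.isSome_iff_exists]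
    exact exists_comm

theorem rePred_of_primrecPred {p : α → Prop} (hp : PrimrecPred p) : REPred p :=
  hp.computablePred.to_re

theorem rePred_comp {p : β → Prop} (hp : REPred p) {f : α → β} (hf : Computable f) :
    REPred fun a => p (f a) :=
  Partrec.comp hp hf

theorem rePred_and {p q : α → Prop} (hp : REPred p) (hq : REPred q) :
    REPred fun a => p a ∧ q a :=
  (Partrec.bind hp (Partrec.comp hq Computable.fst).to₂).dom_re.of_eq fun a => by
    simp [Part.dom_iff_mem]

theorem rePred_exists_nat {D : α → ℕ → Prop} (hD : PrimrecRel D) :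
    REPred fun a => ∃ s, D a s :=
  (Partrec.rfind hD.decide.to_comp.partrec₂).dom_re.of_eq fun a => by
    simp [Nat.rfind_dom]

theorem rePred_or {p q : α → Prop} (hp : REPred p) (hq : REPred q) :
    REPred fun a => p a ∨ q a := by
  obtain ⟨D, hD, -, hpD⟩ := exists_stages_of_rePred hp
  obtain ⟨E, hE, -, hqE⟩ := exists_stages_of_rePred hq
  have hDE : PrimrecRel fun a s => D a s ∨ E a s := PrimrecPred.or hD hE
  exact (rePred_exists_nat hDE).of_eq fun a => by rw [hpD, hqE, exists_or]

theorem rePred_exists {p : α × β → Prop} (hp : REPred p) : REPred fun a => ∃ b, p (a, b) := by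
  obtain ⟨D, hD, -, hpD⟩ := exists_stages_of_rePred hp
  let E (a : α) (s : ℕ) : Bool :=
    ((Encodable.decode s.unpair.1).map fun b => decide (D (a, b) s.unpair.2)).getD false
  have hE : Primrec₂ E := by
    refine Primrec.option_getD.comp (Primrec.option_map (Primrec.decode.comp
      (Primrec.fst.comp (Primrec.unpair.comp Primrec.snd))) ?_) (Primrec.const false)
    exact (hD.comp ((Primrec.fst.comp Primrec.fst).pair Primrec.snd)
      (Primrec.snd.comp (Primrec.unpair.comp (Primrec.snd.comp Primrec.fst)))).decide
  refine (rePred_exists_nat (D := fun a s => E a s = true)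
    (Primrec.eq.comp hE (Primrec.const true))).of_eq fun a => ⟨?_, ?_⟩
  · rintro ⟨s, hs⟩
    obtain ⟨b, -, hb⟩ : ∃ b, Encodable.decode s.unpair.1 = some b ∧ D (a, b) s.unpair.2 := by
      cases h : Encodable.decode (α := β) s.unpair.1 <;> simp_all [E]
    exact ⟨b, (hpD _).2 ⟨_, hb⟩⟩
  · rintro ⟨b, hb⟩
    obtain ⟨t, ht⟩ := (hpD _).1 hb
    exact ⟨Nat.pair (Encodable.encode b) t, by simp [E, ht]⟩

theorem rePred_bind {f : α →. β} (hf : Partrec f) {p : α × β → Prop} (hp : REPred p) :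
    REPred fun a => ∃ b ∈ f a, p (a, b) :=
  (Partrec.bind hf (Partrec.to₂ hp)).dom_re.of_eq fun a => by
    simp [Part.dom_iff_mem]

theorem rePred_forall_lt {p : α × ℕ → Prop} (hp : REPred p) :
    REPred fun x : α × ℕ => ∀ k < x.2, p (x.1, k) := by
  obtain ⟨D, hD, hmono, hpD⟩ := exists_stages_of_rePred hp
  have hall : PrimrecRel fun (x : α × ℕ) s => ∀ k < x.2, D (x.1, k) s := by
    have hR : PrimrecRel fun (k : ℕ) (y : α × ℕ) => D (y.1, k) y.2 :=
      hD.comp ((Primrec.fst.comp Primrec.snd).pair Primrec.fst) (Primrec.snd.comp Primrec.snd)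
    exact (hR.forall_mem_list.comp (Primrec.list_range.comp (Primrec.snd.comp Primrec.fst))
      ((Primrec.fst.comp Primrec.fst).pair Primrec.snd)).of_eq (by simp)
  refine (rePred_exists_nat hall).of_eq
    fun x => ⟨fun ⟨s, hs⟩ k hk => (hpD _).2 ⟨s, hs k hk⟩, fun h => ?_⟩
  choose! t ht using fun k hk => (hpD _).1 (h k hk)
  exact ⟨(Finset.range x.2).sup t, fun k hk =>
    hmono _ (Finset.le_sup (Finset.mem_range.2 hk)) (ht k hk)⟩

theorem computable_of_rePred_eq {f : α → Bool}
    (h : ∀ b, REPred fun a => f a = b) : Computable f := by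
  have hf : ComputablePred fun a => f a = true :=
    ComputablePred.computable_iff_re_compl_re'.2 ⟨h true, (h false).of_eq fun a => by simp⟩
  obtain ⟨f', hf', hff'⟩ := ComputablePred.computable_iff.1 hf
  exact hf'.of_eq fun a => Bool.eq_iff_iff.2 (iff_of_eq (congrFun hff' a).symm)

theorem countable_setOf_computable :
    {f : α → β | Computable f}.Countable := by
  choose code hcode using fun f : {f : α → β // Computable f} =>
    Nat.Partrec.Code.exists_code.1 f.2
  refine Set.countable_coe_iff.1 (Function.Injective.countable (f := code) fun f f' hff' => ?_)
  ext a
  have heval := congrFun ((hcode f).symm.trans ((congrArg _ hff').trans (hcode f')))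
    (Encodable.encode a)
  simpa using heval

end

/-! ### Enumerability relative to an oracle -/

theorem exists_codeO_eval_eq {f : ℕ →. ℕ} (hf : Nat.Partrec f) :
    ∃ c : CodeO, ∀ O, c.eval O = f := by
  obtain ⟨c, rfl⟩ := Nat.Partrec.Code.exists_code.1 hf
  clear hf
  induction c with
  | zero => exact ⟨.zero, fun O => rfl⟩
  | succ => exact ⟨.succ, fun O => rfl⟩
  | left => exact ⟨.left, fun O => rfl⟩
  | right => exact ⟨.right, fun O => rfl⟩
  | pair _ _ hf hg =>
    obtain ⟨⟨f, hf⟩, ⟨g, hg⟩⟩ := And.intro hf hg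
    exact ⟨.pair f g, fun O => by simp only [CodeO.eval, hf, hg]; rfl⟩
  | comp _ _ hf hg =>
    obtain ⟨⟨f, hf⟩, ⟨g, hg⟩⟩ := And.intro hf hg
    exact ⟨.comp f g, fun O => by simp only [CodeO.eval, hf, hg]; rfl⟩
  | prec _ _ hf hg =>
    obtain ⟨⟨f, hf⟩, ⟨g, hg⟩⟩ := And.intro hf hg
    exact ⟨.prec f g, fun O => by simp only [CodeO.eval, hf, hg]; rfl⟩
  | rfind' _ hf =>
    obtain ⟨f, hf⟩ := hf
    exact ⟨.rfind' f, fun O => by simp only [CodeO.eval, hf]; rfl⟩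

theorem CeIn.of_rePred {p : ℕ → Prop} (hp : REPred p) (O : ℕ → ℕ) : CeIn O {m | p m} := by
  obtain ⟨c, hc⟩ := exists_codeO_eval_eq (Partrec.nat_iff.1
    (Partrec.map hp (Computable.const 0).to₂))
  refine ⟨c, Set.ext fun m => ?_⟩
  simp [hc, Part.dom_iff_mem]

theorem CodeO.eval_comp_of_eq_some {O : ℕ → ℕ} (c : CodeO) {d : CodeO} {m n : ℕ}
    (h : d.eval O m = Part.some n) : (CodeO.comp c d).eval O m = c.eval O n :=
  (congrArg (Part.bind · (c.eval O)) h).trans (Part.bind_some n (c.eval O))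

theorem CeIn.inter {O : ℕ → ℕ} {S T : Set ℕ} (hS : CeIn O S) (hT : CeIn O T) :
    CeIn O (S ∩ T) := by
  obtain ⟨c, rfl⟩ := hS
  obtain ⟨d, rfl⟩ := hT
  exact ⟨.pair c d, Set.ext fun m => by simp [CodeO.eval, Part.dom_iff_mem, Seq.seq]⟩

theorem CeIn.preimage {O : ℕ → ℕ} {S : Set ℕ} (hS : CeIn O S) {f : ℕ → ℕ} (hf : Computable f) :
    CeIn O (f ⁻¹' S) := by
  obtain ⟨c, rfl⟩ := hS
  obtain ⟨d, hd⟩ := exists_codeO_eval_eq (Partrec.nat_iff.1 hf)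
  exact ⟨.comp c d, Set.ext fun m => by
    rw [Set.mem_ofPred_eq, c.eval_comp_of_eq_some (congrFun (hd O) m)]; rfl⟩

theorem CodeO.encode_injective : Function.Injective CodeO.encode := by
  intro c
  induction c with
  | zero | succ | left | right | oracle => intro d h; cases d <;> simp [CodeO.encode] at h ⊢
  | pair | comp | prec | rfind' =>
    intro d h
    cases d <;> simp only [CodeO.encode] at h <;> grind [Nat.pair_eq_pair]

/-- A code for the constant function with value `n`. -/
def CodeO.const : ℕ → CodeO
  | 0 => .zero
  | n + 1 => .comp .succ (.const n)

theorem CodeO.eval_const (O : ℕ → ℕ) (n m : ℕ) : (CodeO.const n).eval O m = Part.some n := by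
  induction n with
  | zero => rfl
  | succ n ih => exact CodeO.succ.eval_comp_of_eq_some ih

theorem CodeO.primrec_encode_comp_const (c : CodeO) :
    Primrec fun n => (CodeO.comp c (.const n)).encode := by
  have hcomp (c : CodeO) : Primrec fun i => 2 * (2 * Nat.pair c.encode i + 1) + 5 :=
    Primrec.nat_add.comp (Primrec.nat_mul.comp (Primrec.const 2) (Primrec.nat_add.comp
      (Primrec.nat_mul.comp (Primrec.const 2) (Primrec₂.natPair.comp (Primrec.const _)
        Primrec.id)) (Primrec.const 1))) (Primrec.const 5)
  have hconst : Primrec fun n => (CodeO.const n).encode :=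
    (Primrec.nat_rec₁ 0 ((hcomp .succ).comp₂ Primrec₂.right)).of_eq fun n => by
      induction n with
      | zero => rfl
      | succ n ih => simp only [CodeO.const, CodeO.encode, ← ih]
  exact (hcomp c).comp hconst

theorem jump_encode_comp_const (O : ℕ → ℕ) (c : CodeO) (x : ℕ) :
    jump O (CodeO.comp c (.const x)).encode = if (c.eval O x).Dom then 1 else 0 := by
  simp [jump, CodeO.encode_injective.eq_iff, c.eval_comp_of_eq_some (CodeO.eval_const O x _)]

theorem CeIn.jump {O : ℕ → ℕ} {S : Set ℕ} (hS : CeIn O S) :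
    CeIn (jump O) {x | ∃ y, Nat.pair x y ∉ S} := by
  obtain ⟨c, rfl⟩ := hS
  obtain ⟨d, hd⟩ := exists_codeO_eval_eq (Partrec.nat_iff.1 c.primrec_encode_comp_const.to_comp)
  obtain ⟨e, he⟩ := exists_codeO_eval_eq (Partrec.nat_iff.1
    (Primrec₂.natPair.comp Primrec.id (Primrec.const 0)).to_comp)
  have hquery (z : ℕ) : (CodeO.comp .oracle d).eval (RandProb.jump O) z
      = Part.some (if (c.eval O z).Dom then 1 else 0) := by
    rw [CodeO.oracle.eval_comp_of_eq_some (congrFun (hd _) z), ← jump_encode_comp_const]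
    rfl
  refine ⟨.comp (.rfind' (.comp .oracle d)) e, Set.ext fun x => ?_⟩
  rw [Set.mem_ofPred_eq, Set.mem_ofPred_eq, CodeO.eval_comp_of_eq_some _ (congrFun (he _) x)]
  rw [CodeO.eval]
  simp only [hquery, Nat.unpaired, id_eq, Nat.unpair_pair, add_zero]
  refine Iff.trans ?_ Nat.rfind_dom.symm
  simp

theorem exists_computable_surjective (α : Type*) [Primcodable α] [Nonempty α] :
    ∃ f : ℕ → α, Computable f ∧ Function.Surjective f :=
  have := Classical.inhabited_of_nonempty ‹Nonempty α›
  ⟨fun n => (Encodable.decode n).getD default,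
    Computable.option_getD Computable.decode (Computable.const default),
    fun a => ⟨Encodable.encode a, by simp⟩⟩

theorem CeIn.iterJump_two {β γ : Type*} [Primcodable β] [Nonempty β] [Primcodable γ] [Nonempty γ]
    {q : ℕ × β × γ → Prop} (hq : REPred q) : CeIn (iterJump 2) {m | ∃ b, ∀ c, q (m, b, c)} := by
  obtain ⟨f, hf, hf'⟩ := exists_computable_surjective β
  obtain ⟨g, hg, hg'⟩ := exists_computable_surjective γ
  have hfst : Computable fun n : ℕ => n.unpair.1 := Computable.fst.comp Computable.unpair
  have hsnd : Computable fun n : ℕ => n.unpair.2 := Computable.snd.comp Computable.unpair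
  have hq' : REPred fun n : ℕ => q (n.unpair.1.unpair.1, f n.unpair.1.unpair.2, g n.unpair.2) :=
    rePred_comp hq ((hfst.comp hfst).pair ((hf.comp (hsnd.comp hfst)).pair (hg.comp hsnd)))
  have hce : CeIn (iterJump 2) _ := (CeIn.of_rePred hq' (iterJump 0)).jump.jump
  convert hce using 1
  ext m
  simp [hf'.exists, hg'.forall]

/-! ### Fractions as natural-number data -/

/-- Fractions `(a - b) / (d + 1)`, represented by the triple `(a, b, d)` of natural numbers, so
that primitive recursive arithmetic on them is arithmetic on `ℕ`. -/
abbrev Frac := ℕ × ℕ × ℕ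

namespace Frac

/-- The real number represented by a fraction. -/
noncomputable def toReal (x : Frac) : ℝ := (x.1 - x.2.1) / (x.2.2 + 1)

/-- Addition of fractions. -/
def add (x y : Frac) : Frac :=
  (x.1 * (y.2.2 + 1) + y.1 * (x.2.2 + 1), x.2.1 * (y.2.2 + 1) + y.2.1 * (x.2.2 + 1),
    x.2.2 * y.2.2 + x.2.2 + y.2.2)

theorem toReal_add (x y : Frac) : (x.add y).toReal = x.toReal + y.toReal := by
  simp only [toReal, add]
  push_cast
  field_simp
  ring

theorem primrec_add : Primrec₂ add := by
  have hmul {f g : Frac × Frac → ℕ} (hf : Primrec f) (hg : Primrec g) :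
      Primrec fun p => f p * (g p + 1) :=
    Primrec.nat_mul.comp hf (Primrec.succ.comp hg)
  have hd : Primrec fun p : Frac × Frac => p.1.2.2 :=
    Primrec.snd.comp (Primrec.snd.comp Primrec.fst)
  have hd' : Primrec fun p : Frac × Frac => p.2.2.2 :=
    Primrec.snd.comp (Primrec.snd.comp Primrec.snd)
  exact (Primrec.nat_add.comp (hmul (Primrec.fst.comp Primrec.fst) hd')
      (hmul (Primrec.fst.comp Primrec.snd) hd)).pair
    ((Primrec.nat_add.comp (hmul (Primrec.fst.comp (Primrec.snd.comp Primrec.fst)) hd')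
      (hmul (Primrec.fst.comp (Primrec.snd.comp Primrec.snd)) hd)).pair
    (Primrec.nat_add.comp (Primrec.nat_add.comp (Primrec.nat_mul.comp hd hd') hd) hd'))

theorem toReal_lt_toReal_iff (x y : Frac) : x.toReal < y.toReal ↔
    x.1 * (y.2.2 + 1) + y.2.1 * (x.2.2 + 1) < y.1 * (x.2.2 + 1) + x.2.1 * (y.2.2 + 1) := by
  rw [toReal, toReal, div_lt_div_iff₀ (by positivity) (by positivity), ← @Nat.cast_lt ℝ]
  push_cast
  constructor <;> intro h <;> linarith

theorem primrecRel_toReal_lt : PrimrecRel fun x y : Frac => x.toReal < y.toReal := by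
  have hmul {f g : Frac × Frac → ℕ} (hf : Primrec f) (hg : Primrec g) :
      Primrec fun p => f p * (g p + 1) :=
    Primrec.nat_mul.comp hf (Primrec.succ.comp hg)
  have hd : Primrec fun p : Frac × Frac => p.1.2.2 :=
    Primrec.snd.comp (Primrec.snd.comp Primrec.fst)
  have hd' : Primrec fun p : Frac × Frac => p.2.2.2 :=
    Primrec.snd.comp (Primrec.snd.comp Primrec.snd)
  exact (Primrec.nat_lt.comp
    (Primrec.nat_add.comp (hmul (Primrec.fst.comp Primrec.fst) hd')
      (hmul (Primrec.fst.comp (Primrec.snd.comp Primrec.snd)) hd))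
    (Primrec.nat_add.comp (hmul (Primrec.fst.comp Primrec.snd) hd)
      (hmul (Primrec.fst.comp (Primrec.snd.comp Primrec.fst)) hd'))).of_eq
    fun p => (toReal_lt_toReal_iff p.1 p.2).symm

theorem primrecRel_toReal_le : PrimrecRel fun x y : Frac => x.toReal ≤ y.toReal :=
  (PrimrecPred.not (primrecRel_toReal_lt.comp Primrec.snd Primrec.fst)).of_eq
    fun _ => not_lt

/-- The dyadic fraction `n / 2 ^ s`. -/
def dyadic (n s : ℕ) : Frac := (n, 0, 2 ^ s - 1)

theorem toReal_dyadic (n s : ℕ) : (dyadic n s).toReal = n / 2 ^ s := by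
  simp [toReal, dyadic, Nat.cast_sub Nat.one_le_two_pow]

theorem primrec_two_pow : Primrec fun s : ℕ => 2 ^ s :=
  (Primrec.nat_rec₁ 1 (Primrec.nat_mul.comp Primrec.snd (Primrec.const 2)).to₂).of_eq fun s => by
    induction s with
    | zero => rfl
    | succ s ih => simp only [pow_succ, ← ih]

theorem primrec_dyadic : Primrec₂ dyadic :=
  Primrec.fst.pair ((Primrec.const 0).pair
    (Primrec.nat_sub.comp (primrec_two_pow.comp Primrec.snd) (Primrec.const 1)))

/-- The fraction representing the rational number with code `n`. The integer numerator is coded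
by `2 * a` if it equals `a ≥ 0`, and by `2 * a + 1` if it equals `-(a + 1)`. -/
def ofCode (n : ℕ) : Frac :=
  if n.unpair.1 % 2 = 0 then (n.unpair.1 / 2, 0, n.unpair.2 - 1)
  else (0, n.unpair.1 / 2 + 1, n.unpair.2 - 1)

theorem toReal_ofCode_encode (q : ℚ) : (ofCode (Encodable.encode q)).toReal = q := by
  have hq : Encodable.encode q = Nat.pair (Encodable.encode q.num) q.den := rfl
  have hden : ((q.den - 1 : ℕ) : ℝ) + 1 = q.den := by
    rw [Nat.cast_sub q.den_pos]
    simp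
  rw [Rat.cast_def, hq]
  simp only [ofCode, Nat.unpair_pair]
  cases h : q.num with
  | ofNat n =>
    rw [show Encodable.encode (Int.ofNat n) = 2 * n from rfl]
    simp [toReal, hden]
  | negSucc n =>
    rw [show Encodable.encode (Int.negSucc n) = 2 * n + 1 from rfl]
    have hdiv : (2 * n + 1) / 2 = n := by omega
    simp [toReal, hden, hdiv]

theorem primrec_ofCode : Primrec ofCode := by
  have hnum : Primrec fun n : ℕ => n.unpair.1 := Primrec.fst.comp Primrec.unpair
  have hhalf : Primrec fun n : ℕ => n.unpair.1 / 2 := Primrec.nat_div.comp hnum (Primrec.const 2)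
  have hden : Primrec fun n : ℕ => n.unpair.2 - 1 :=
    Primrec.nat_sub.comp (Primrec.snd.comp Primrec.unpair) (Primrec.const 1)
  exact Primrec.ite
    (Primrec.eq.comp (Primrec.nat_mod.comp hnum (Primrec.const 2)) (Primrec.const 0))
    (hhalf.pair ((Primrec.const 0).pair hden))
    ((Primrec.const 0).pair ((Primrec.succ.comp hhalf).pair hden))

theorem exists_between {u v : ℝ} (h : u < v) : ∃ x : Frac, u < x.toReal ∧ x.toReal < v := by
  obtain ⟨q, hq⟩ := exists_rat_btwn h
  exact ⟨ofCode (Encodable.encode q), by rwa [toReal_ofCode_encode]⟩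

end Frac

/-! ### Reals with two-sided approximations are not random -/

/-- The test covering a real whose left and right cuts are `L` and `R`: its `i`-th component
consists of the intervals with endpoints in `L` and `R` of length at most `2 ^ -(i + 1)`. -/
def cutTest (L R : Set ℕ) : Set ℕ :=
  {n | n.unpair.2.unpair.1 ∈ L ∧ n.unpair.2.unpair.2 ∈ R ∧
    (Frac.ofCode n.unpair.2.unpair.2).toReal
      ≤ ((Frac.ofCode n.unpair.2.unpair.1).add (Frac.dyadic 1 (n.unpair.1 + 1))).toReal}

theorem CeIn.cutTest {O : ℕ → ℕ} {L R : Set ℕ} (hL : CeIn O L) (hR : CeIn O R) :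
    CeIn O (cutTest L R) := by
  have hp : Primrec fun n : ℕ => n.unpair.2.unpair.1 :=
    Primrec.fst.comp (Primrec.unpair.comp (Primrec.snd.comp Primrec.unpair))
  have hq : Primrec fun n : ℕ => n.unpair.2.unpair.2 :=
    Primrec.snd.comp (Primrec.unpair.comp (Primrec.snd.comp Primrec.unpair))
  have hi : Primrec fun n : ℕ => Frac.dyadic 1 (n.unpair.1 + 1) :=
    Frac.primrec_dyadic.comp (Primrec.const 1)
      (Primrec.succ.comp (Primrec.fst.comp Primrec.unpair))
  exact (hL.preimage hp.to_comp).inter ((hR.preimage hq.to_comp).inter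
    (CeIn.of_rePred (rePred_of_primrecPred (Frac.primrecRel_toReal_le.comp
      (Frac.primrec_ofCode.comp hq)
      (Frac.primrec_add.comp (Frac.primrec_ofCode.comp hp) hi))) O))

theorem mem_testSet_cutTest {L R : Set ℕ} {i : ℕ} {x : ℝ} :
    x ∈ testSet (cutTest L R) i ↔ ∃ p q : ℚ, Encodable.encode p ∈ L ∧ Encodable.encode q ∈ R ∧
      (q : ℝ) ≤ p + 1 / 2 ^ (i + 1) ∧ (p : ℝ) < x ∧ x < q := by
  simp [testSet, cutTest, Frac.toReal_add, Frac.toReal_dyadic, Frac.toReal_ofCode_encode,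
    and_assoc]

theorem not_mlRandomIn_of_ceIn_cuts {O : ℕ → ℕ} {α : ℝ} {L R : Set ℕ}
    (hL : CeIn O L) (hR : CeIn O R)
    (hLα : ∀ q : ℚ, Encodable.encode q ∈ L ↔ (q : ℝ) < α)
    (hRα : ∀ q : ℚ, Encodable.encode q ∈ R ↔ α < q) : ¬ MLRandomIn O α := by
  have hsmall (i : ℕ) :
      volume (testSet (cutTest L R) i) ≤ ENNReal.ofReal ((2 : ℝ)⁻¹ ^ i) := by
    have hsub : testSet (cutTest L R) i ⊆
        Set.Icc (α - 1 / 2 ^ (i + 1)) (α + 1 / 2 ^ (i + 1)) := by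
      intro x hx
      obtain ⟨p, q, hp, hq, hpq, hpx, hxq⟩ := mem_testSet_cutTest.1 hx
      rw [hLα] at hp
      rw [hRα] at hq
      constructor <;> linarith
    refine (measure_mono hsub).trans ?_
    rw [Real.volume_Icc]
    refine ENNReal.ofReal_le_ofReal (le_of_eq ?_)
    rw [inv_pow, pow_succ]
    field_simp
    ring
  intro hrandom
  obtain ⟨i, hi⟩ := hrandom _ (hL.cutTest hR) hsmall
  have hδ : (0 : ℝ) < 1 / 2 ^ (i + 1) / 2 := by positivity
  obtain ⟨p, hp, hpα⟩ := exists_rat_btwn (sub_lt_self α hδ)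
  obtain ⟨q, hαq, hq⟩ := exists_rat_btwn (lt_add_of_pos_right α hδ)
  exact hi (mem_testSet_cutTest.2
    ⟨p, q, (hLα p).2 hpα, (hRα q).2 hαq, by linarith, hpα, hαq⟩)

/-! ### Reals with `Σ₂` right cut -/

section

variable {α β : Type*} [Primcodable α] [Primcodable β]

/-- `Σ₂` predicates, in the form `∃ n, ¬ q n` with `q` recursively enumerable. -/
def Sigma2Pred (p : α → Prop) : Prop :=
  ∃ q : α × ℕ → Prop, REPred q ∧ ∀ a, p a ↔ ∃ n, ¬ q (a, n)

theorem Sigma2Pred.of_exists_not [Nonempty β] {p : α → Prop} {q : α × β → Prop} (hq : REPred q)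
    (hpq : ∀ a, p a ↔ ∃ b, ¬ q (a, b)) : Sigma2Pred p := by
  obtain ⟨f, hf, hf'⟩ := exists_computable_surjective β
  exact ⟨fun x => q (x.1, f x.2),
    rePred_comp hq (Computable.fst.pair (hf.comp Computable.snd)),
    fun a => by rw [hpq, hf'.exists]⟩

theorem Sigma2Pred.comp {p : β → Prop} (hp : Sigma2Pred p) {f : α → β} (hf : Computable f) :
    Sigma2Pred fun a => p (f a) := by
  obtain ⟨q, hq, hpq⟩ := hp
  exact ⟨fun x => q (f x.1, x.2),
    rePred_comp hq ((hf.comp Computable.fst).pair Computable.snd), fun a => hpq _⟩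

theorem CeIn.exists_and_not [Nonempty β] {p p' : ℕ × β → Prop}
    (hp : Sigma2Pred p) (hp' : Sigma2Pred p') :
    CeIn (iterJump 2) {m | ∃ b, p (m, b) ∧ ¬ p' (m, b)} := by
  obtain ⟨q, hq, hpq⟩ := hp
  obtain ⟨q', hq', hpq'⟩ := hp'
  obtain ⟨D, hD, -, hqD⟩ := exists_stages_of_rePred hq
  have hm : Primrec fun x : ℕ × (β × ℕ) × (ℕ × ℕ) => (x.1, x.2.1.1) :=
    Primrec.fst.pair (Primrec.fst.comp (Primrec.fst.comp Primrec.snd))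
  have hstage : REPred fun x : ℕ × (β × ℕ) × (ℕ × ℕ) =>
      ¬ D ((x.1, x.2.1.1), x.2.1.2) x.2.2.1 ∧ q' ((x.1, x.2.1.1), x.2.2.2) :=
    rePred_and
      (rePred_of_primrecPred (hD.comp
        (hm.pair (Primrec.snd.comp (Primrec.fst.comp Primrec.snd)))
        (Primrec.fst.comp (Primrec.snd.comp Primrec.snd))).not)
      (rePred_comp hq' (hm.pair (Primrec.snd.comp (Primrec.snd.comp Primrec.snd))).to_comp)
  have hce : CeIn (iterJump 2) _ := CeIn.iterJump_two hstage
  convert hce using 1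
  ext m
  simp [hpq, hpq', hqD, forall_and]

/-- The right cut of `β` is `Σ₂`. -/
def HasSigma2RightCut (β : ℝ) : Prop := Sigma2Pred fun x : Frac => β < x.toReal

theorem not_nRandom_three_sub {β γ : ℝ} (hβ : HasSigma2RightCut β) (hγ : HasSigma2RightCut γ) :
    ¬ NRandom 3 (β - γ) := by
  have hadd : Computable fun x : ℕ × Frac => (Frac.ofCode x.1).add x.2 :=
    (Frac.primrec_add.comp (Frac.primrec_ofCode.comp Primrec.fst) Primrec.snd).to_comp
  refine not_mlRandomIn_of_ceIn_cuts
    (CeIn.exists_and_not (hγ.comp Computable.snd) (hβ.comp hadd))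
    (CeIn.exists_and_not (hβ.comp hadd) (hγ.comp Computable.snd))
    (fun q => ?_) fun q => ?_
  · simp only [Set.mem_ofPred_eq, Frac.toReal_add, Frac.toReal_ofCode_encode, not_lt]
    refine ⟨fun ⟨r, hr, hβr⟩ => by linarith, fun h => ?_⟩
    obtain ⟨r, hγr, hr⟩ := Frac.exists_between (lt_sub_comm.1 h)
    exact ⟨r, hγr, by linarith⟩
  · simp only [Set.mem_ofPred_eq, Frac.toReal_add, Frac.toReal_ofCode_encode, not_lt]
    refine ⟨fun ⟨r, hβr, hr⟩ => by linarith, fun h => ?_⟩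
    obtain ⟨r, hr, hγr⟩ := Frac.exists_between (sub_lt_comm.1 h)
    exact ⟨r, by linarith, hγr.le⟩

/-! ### Uniformly left-c.e. families of reals -/

/-- A family of reals is uniformly left-c.e. if it is the limit of a nondecreasing, uniformly
primitive recursive sequence of dyadic rationals. For simplicity the stage-`s` approximation is
required to be nonnegative with denominator `2 ^ s`. -/
def LeftCe (r : α → ℝ) : Prop :=
  ∃ num : α → ℕ → ℕ, Primrec₂ num ∧ ∀ a, Monotone (fun s => (num a s / 2 ^ s : ℝ)) ∧
    Tendsto (fun s => (num a s / 2 ^ s : ℝ)) atTop (𝓝 (r a))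

namespace LeftCe

theorem comp {r : β → ℝ} (hr : LeftCe r) {f : α → β} (hf : Primrec f) :
    LeftCe fun a => r (f a) := by
  obtain ⟨num, hnum, h⟩ := hr
  exact ⟨fun a => num (f a), hnum.comp (hf.comp Primrec.fst) Primrec.snd, fun a => h (f a)⟩

theorem min {r r' : α → ℝ} (hr : LeftCe r) (hr' : LeftCe r') :
    LeftCe fun a => min (r a) (r' a) := by
  obtain ⟨num, hnum, h⟩ := hr
  obtain ⟨num', hnum', h'⟩ := hr'
  have hmin (a s) : (((num a s ⊓ num' a s : ℕ) : ℝ) / 2 ^ s)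
      = (num a s / 2 ^ s : ℝ) ⊓ (num' a s / 2 ^ s : ℝ) := by
    rw [Nat.cast_min, min_div_div_right (by positivity)]
  refine ⟨fun a s => num a s ⊓ num' a s, Primrec.nat_min.comp hnum hnum', fun a => ?_⟩
  simp only [hmin]
  exact ⟨(h a).1.min (h' a).1, (h a).2.min (h' a).2⟩

theorem sum [DecidableEq β] {r : α × β → ℝ} (hr : LeftCe r) {l : α → List β} (hl : Primrec l)
    (hnodup : ∀ a, (l a).Nodup) : LeftCe fun a => ∑ b ∈ (l a).toFinset, r (a, b) := by
  obtain ⟨num, hnum, h⟩ := hr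
  have hlistsum : Primrec fun l : List ℕ => l.sum :=
    (Primrec.list_foldr Primrec.id (Primrec.const 0) (Primrec.nat_add.comp
      (Primrec.fst.comp Primrec.snd) (Primrec.snd.comp Primrec.snd)).to₂).of_eq
      fun l => by rw [List.sum]; rfl
  have hdiv (a s) : ((((l a).map fun b => num (a, b) s).sum : ℕ) : ℝ) / 2 ^ s
      = ∑ b ∈ (l a).toFinset, (num (a, b) s : ℝ) / 2 ^ s := by
    rw [← List.sum_toFinset _ (hnodup a), Nat.cast_sum, Finset.sum_div]
  refine ⟨fun a s => ((l a).map fun b => num (a, b) s).sum,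
    hlistsum.comp (Primrec.list_map (hl.comp Primrec.fst) (hnum.comp
      ((Primrec.fst.comp Primrec.fst).pair Primrec.snd) (Primrec.snd.comp Primrec.fst))),
    fun a => ?_⟩
  simp only [hdiv]
  exact ⟨fun s t hst => Finset.sum_le_sum fun b _ => (h (a, b)).1 hst,
    tendsto_finsetSum _ fun b _ => (h (a, b)).2⟩

theorem one_div_two_pow : LeftCe fun k : ℕ => (1 / 2 ^ k : ℝ) := by
  have hval (k s : ℕ) : (((2 ^ s / 2 ^ k : ℕ) : ℝ) / 2 ^ s) = if k ≤ s then 1 / 2 ^ k else 0 := by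
    split_ifs with hks
    · rw [Nat.cast_div (pow_dvd_pow 2 hks) (by positivity)]
      push_cast
      field_simp
    · rw [Nat.div_eq_of_lt (Nat.pow_lt_pow_right one_lt_two (not_le.1 hks))]
      simp
  refine ⟨fun k s => 2 ^ s / 2 ^ k, Primrec.nat_div.comp (Frac.primrec_two_pow.comp Primrec.snd)
    (Frac.primrec_two_pow.comp Primrec.fst), fun k => ?_⟩
  simp only [hval]
  refine ⟨monotone_nat_of_le_succ fun s => ?_, tendsto_const_nhds.congr' ?_⟩
  · split_ifs <;> first | omega | simp
  · filter_upwards [eventually_ge_atTop k] with s hs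
    rw [if_pos hs]

theorem rePred_lt {r : α → ℝ} (hr : LeftCe r) :
    REPred fun x : α × Frac => x.2.toReal < r x.1 := by
  obtain ⟨num, hnum, h⟩ := hr
  have hstage : PrimrecRel fun (x : α × Frac) s =>
      x.2.toReal < (Frac.dyadic (num x.1 s) s).toReal :=
    Frac.primrecRel_toReal_lt.comp (Primrec.snd.comp Primrec.fst) (Frac.primrec_dyadic.comp
      (hnum.comp (Primrec.fst.comp Primrec.fst) Primrec.snd) Primrec.snd)
  refine (rePred_exists_nat hstage).of_eq fun ⟨a, x⟩ => ?_
  simp only [Frac.toReal_dyadic]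
  exact ⟨fun ⟨s, hs⟩ => hs.trans_le ((h a).1.ge_of_tendsto (h a).2 s),
    fun hx => ((h a).2.eventually_const_lt hx).exists⟩

theorem hasSigma2RightCut_of_isGLB {r : ℕ × ℕ → ℝ} (hr : LeftCe r) {L : ℕ → ℝ} {β : ℝ}
    (hrL : ∀ k, Tendsto (fun m => r (k, m)) atTop (𝓝 (L k))) (hβ : IsGLB (Set.range L) β) :
    HasSigma2RightCut β := by
  have hn : Primrec fun z : (Frac × Frac × ℕ × ℕ) × ℕ => z.1.2.2.2 :=
    Primrec.snd.comp (Primrec.snd.comp (Primrec.snd.comp Primrec.fst))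
  have hk : Primrec fun z : (Frac × Frac × ℕ × ℕ) × ℕ => z.1.2.2.1 :=
    Primrec.fst.comp (Primrec.snd.comp (Primrec.snd.comp Primrec.fst))
  have hy : Primrec fun z : (Frac × Frac × ℕ × ℕ) × ℕ => z.1.2.1 :=
    Primrec.fst.comp (Primrec.snd.comp Primrec.fst)
  have hkmy : Computable fun z : (Frac × Frac × ℕ × ℕ) × ℕ =>
      ((z.1.2.2.1, z.2), z.1.2.1) :=
    ((hk.pair Primrec.snd).pair hy).to_comp
  have hlt : REPred fun z : (Frac × Frac × ℕ × ℕ) × ℕ =>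
      z.1.2.2.2 ≤ z.2 ∧ z.1.2.1.toReal < r (z.1.2.2.1, z.2) :=
    rePred_and (rePred_of_primrecPred (Primrec.nat_le.comp hn Primrec.snd))
      ((rePred_comp hr.rePred_lt hkmy).of_eq fun _ => Iff.rfl)
  have hle : REPred fun z : Frac × Frac × ℕ × ℕ => z.1.toReal ≤ z.2.1.toReal :=
    rePred_of_primrecPred (Frac.primrecRel_toReal_le.comp Primrec.fst
      (Primrec.fst.comp Primrec.snd))
  have hq := rePred_or hle (rePred_exists hlt)
  refine Sigma2Pred.of_exists_not hq fun x => ?_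
  simp only [not_or, not_exists, not_and, not_le, not_lt, Prod.exists]
  constructor
  · intro hx
    obtain ⟨_, ⟨k, rfl⟩, hk⟩ := (isGLB_lt_iff hβ).1 hx
    obtain ⟨y, hLy, hyx⟩ := Frac.exists_between hk
    obtain ⟨n, hn⟩ := eventually_atTop.1 ((hrL k).eventually_le_const hLy)
    obtain ⟨a, b, d⟩ := y
    exact ⟨a, b, d, k, n, hyx, hn⟩
  · rintro ⟨a, b, d, k, n, hyx, hn⟩
    exact ((hβ.1 ⟨k, rfl⟩).trans (le_of_tendsto' ((tendsto_add_atTop_iff_nat n).2 (hrL k))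
      fun m => hn _ (Nat.le_add_left n m))).trans_lt hyx

end LeftCe

end

/-! ### The uniform measure of cylinders -/

theorem measurable_digits : Measurable digits :=
  measurable_pi_lambda _ fun n =>
    (measurable_of_countable fun z : ℤ => decide (z % 2 = 1)).comp
      (Int.measurable_floor.comp (measurable_id.mul_const (2 ^ (n + 1))))

instance : IsProbabilityMeasure mu :=
  have : IsProbabilityMeasure (volume.restrict (Set.Ico (0 : ℝ) 1)) := ⟨by simp⟩
  Measure.isProbabilityMeasure_map measurable_digits.aemeasurable

@[simp]
theorem length_initSeg (X : Cantor) (n : ℕ) : (initSeg X n).length = n := by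
  simp [initSeg]

theorem initSeg_succ (X : Cantor) (n : ℕ) : initSeg X (n + 1) = initSeg X n ++ [X n] := by
  simp [initSeg, List.range_succ]

theorem take_initSeg (X : Cantor) {m n : ℕ} (h : m ≤ n) :
    (initSeg X n).take m = initSeg X m := by
  rw [initSeg, ← List.map_take, List.take_range, min_eq_left h, initSeg]

theorem initSeg_prefix_initSeg (X : Cantor) {m n : ℕ} (h : m ≤ n) :
    initSeg X m <+: initSeg X n :=
  take_initSeg X h ▸ List.take_prefix m _

theorem measurableSet_initSeg_mem (n : ℕ) (S : Set (List Bool)) :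
    MeasurableSet {X : Cantor | initSeg X n ∈ S} := by
  have hrestrict : Measurable fun (X : Cantor) (i : Fin n) => X i :=
    measurable_pi_lambda _ fun i => measurable_pi_apply _
  have hofFn (X : Cantor) : initSeg X n = List.ofFn fun i : Fin n => X i :=
    List.ext_getElem (by simp) (by simp [initSeg])
  simp only [hofFn]
  exact hrestrict (Set.toFinite {f : Fin n → Bool | List.ofFn f ∈ S}).measurableSet

theorem cyl_eq_iUnion (S : Set (List Bool)) : cyl S = ⋃ n, {X | initSeg X n ∈ S} := by
  ext X
  simp [cyl]

theorem measurableSet_cyl (S : Set (List Bool)) : MeasurableSet (cyl S) :=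
  cyl_eq_iUnion S ▸ MeasurableSet.iUnion fun n => measurableSet_initSeg_mem n S

/-- The natural number with binary expansion `σ`, most significant bit first. -/
def binVal (σ : List Bool) : ℕ := σ.foldl (fun a b => Nat.bit b a) 0

theorem binVal_append_singleton (σ : List Bool) (b : Bool) :
    binVal (σ ++ [b]) = Nat.bit b (binVal σ) := by
  simp [binVal]

theorem binVal_lt (σ : List Bool) : binVal σ < 2 ^ σ.length := by
  induction σ using List.reverseRecOn with
  | nil => simp [binVal]
  | append_singleton σ b ih =>
    rw [binVal_append_singleton, List.length_append, List.length_singleton, pow_succ, Nat.bit_val]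
    have := b.toNat_le
    omega

theorem initSeg_digits_eq_iff {x : ℝ} (hx : x ∈ Set.Ico (0 : ℝ) 1) (σ : List Bool) :
    initSeg (digits x) σ.length = σ ↔ ⌊x * 2 ^ σ.length⌋ = binVal σ := by
  induction σ using List.reverseRecOn with
  | nil => simpa [initSeg, binVal] using Int.floor_eq_zero_iff.2 hx
  | append_singleton σ b ih =>
    have hhalf : ⌊x * 2 ^ σ.length⌋ = ⌊x * 2 ^ (σ.length + 1)⌋ / 2 := by
      rw [pow_succ, ← mul_assoc]
      simpa using Int.floor_div_natCast (x * 2 ^ σ.length * 2) 2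
    rw [List.length_append, List.length_singleton, initSeg_succ, List.append_singleton_inj, ih,
      binVal_append_singleton, hhalf, digits, Nat.bit_val]
    cases b <;> simp <;> omega

theorem mu_real_initSeg_eq (σ : List Bool) :
    mu.real {X | initSeg X σ.length = σ} = 1 / 2 ^ σ.length := by
  have hpos : (0 : ℝ) < 2 ^ σ.length := by positivity
  have hval : (binVal σ + 1 : ℝ) ≤ 2 ^ σ.length := by exact_mod_cast binVal_lt σ
  have hIco : digits ⁻¹' {X | initSeg X σ.length = σ} ∩ Set.Ico 0 1 =
      Set.Ico (binVal σ / 2 ^ σ.length : ℝ) ((binVal σ + 1) / 2 ^ σ.length) := by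
    ext x
    have hfloor : x ∈ Set.Ico (binVal σ / 2 ^ σ.length : ℝ) ((binVal σ + 1) / 2 ^ σ.length) ↔
        ⌊x * 2 ^ σ.length⌋ = binVal σ := by
      rw [Int.floor_eq_iff, Set.mem_Ico, div_le_iff₀ hpos, lt_div_iff₀ hpos, Int.cast_natCast]
    rw [hfloor]
    refine ⟨fun ⟨h, hx⟩ => (initSeg_digits_eq_iff hx σ).1 h, fun h => ?_⟩
    have hx : x ∈ Set.Ico (0 : ℝ) 1 :=
      Set.Ico_subset_Ico (by positivity) ((div_le_one hpos).2 hval) (hfloor.2 h)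
    exact ⟨(initSeg_digits_eq_iff hx σ).2 h, hx⟩
  have hmeas := measurableSet_initSeg_mem σ.length {σ}
  simp only [Set.mem_singleton_iff] at hmeas
  rw [measureReal_def, mu, Measure.map_apply measurable_digits hmeas,
    Measure.restrict_apply (measurable_digits hmeas), hIco, Real.volume_Ico, ← sub_div,
    add_sub_cancel_left, ENNReal.toReal_ofReal (by positivity)]

/-- The list of all binary strings of length `n`. -/
def strings : ℕ → List (List Bool)
  | 0 => [[]]
  | n + 1 => (strings n).map (false :: ·) ++ (strings n).map (true :: ·)

theorem mem_strings {n : ℕ} {τ : List Bool} : τ ∈ strings n ↔ τ.length = n := by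
  induction n generalizing τ with
  | zero => simp [strings]
  | succ n ih =>
    cases τ with
    | nil => simp [strings]
    | cons b τ => cases b <;> simp [strings, ih]

theorem nodup_strings (n : ℕ) : (strings n).Nodup := by
  induction n with
  | zero => simp [strings]
  | succ n ih =>
    refine (ih.map List.cons_injective).append (ih.map List.cons_injective) fun σ h h' => ?_
    obtain ⟨τ, -, rfl⟩ := List.mem_map.1 h
    simp at h'

theorem primrec_strings : Primrec strings := by
  have hcons (b : Bool) : Primrec fun p : ℕ × List (List Bool) => p.2.map (b :: ·) :=
    Primrec.list_map Primrec.snd (Primrec.list_cons.comp (Primrec.const b) Primrec.snd).to₂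
  refine (Primrec.nat_rec₁ [[]]
    (Primrec.list_append.comp (hcons false) (hcons true)).to₂).of_eq fun n => ?_
  induction n with
  | zero => rfl
  | succ n ih => simp only [strings, ← ih]

theorem mu_real_initSeg_mem (n : ℕ) (S : Set (List Bool)) [DecidablePred (· ∈ S)] :
    mu.real {X | initSeg X n ∈ S} = ((strings n).filter (· ∈ S)).length / 2 ^ n := by
  have hunion : {X : Cantor | initSeg X n ∈ S} =
      ⋃ σ ∈ ((strings n).filter (· ∈ S)).toFinset, {X | initSeg X n = σ} := by
    ext X
    simp [mem_strings]
  have hcell : ∀ σ ∈ ((strings n).filter (· ∈ S)).toFinset,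
      mu.real {X | initSeg X n = σ} = 1 / 2 ^ n := by
    intro σ hσ
    obtain rfl : σ.length = n := mem_strings.1 (List.mem_filter.1 (List.mem_toFinset.1 hσ)).1
    exact mu_real_initSeg_eq σ
  rw [hunion, measureReal_biUnion_finset, Finset.sum_congr rfl hcell, Finset.sum_const,
    List.toFinset_card_of_nodup ((nodup_strings n).filter _), nsmul_eq_mul, mul_one_div]
  · exact fun σ _ τ _ hne => Set.disjoint_left.2 fun X hσ hτ => hne (hσ.symm.trans hτ)
  · exact fun σ _ => measurableSet_initSeg_mem n {σ}

/-! ### Effectively open classes -/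

theorem exists_primrec_upClosed_cyl_eq {α : Type*} [Primcodable α] {p : α × List Bool → Prop}
    (hp : REPred p) :
    ∃ S : α → Set (List Bool), PrimrecRel (fun a σ => σ ∈ S a) ∧ (∀ a, UpClosed (S a)) ∧
      ∀ a, cyl (S a) = cyl {σ | p (a, σ)} := by
  obtain ⟨D, hD, hmono, hpD⟩ := exists_stages_of_rePred hp
  have htake : PrimrecRel fun (i : ℕ) (x : α × List Bool) => D (x.1, x.2.take i) x.2.length :=
    hD.comp ((Primrec.fst.comp Primrec.snd).pair
        (Primrec.list_take.comp Primrec.fst (Primrec.snd.comp Primrec.snd)))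
      (Primrec.list_length.comp (Primrec.snd.comp Primrec.snd))
  refine ⟨fun a => {σ | ∃ i ≤ σ.length, D (a, σ.take i) σ.length}, ?_, ?_, fun a => ?_⟩
  · exact (htake.exists_mem_list.comp (Primrec.list_range.comp (Primrec.succ.comp
      (Primrec.list_length.comp Primrec.snd))) Primrec.id).of_eq
      fun x => by simp
  · rintro a _ ⟨i, hi, hD⟩ _ ⟨τ, rfl⟩
    refine ⟨i, by simp; omega, ?_⟩
    rw [List.take_append_of_le_length hi]
    exact hmono _ (by simp) hD
  · ext X
    constructor
    · rintro ⟨n, i, hi, hD⟩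
      rw [length_initSeg] at hi
      rw [take_initSeg X hi] at hD
      exact ⟨i, (hpD _).2 ⟨_, hD⟩⟩
    · rintro ⟨i, hi⟩
      obtain ⟨s, hs⟩ := (hpD _).1 hi
      refine ⟨max i s, i, by simp, ?_⟩
      rw [take_initSeg X (le_max_left i s), length_initSeg]
      exact hmono _ (le_max_right i s) hs

theorem UpClosed.monotone_initSeg_mem {S : Set (List Bool)} (hS : UpClosed S) :
    Monotone fun n => {X | initSeg X n ∈ S} :=
  fun _ _ h X hX => hS _ hX _ (initSeg_prefix_initSeg X h)

theorem UpClosed.tendsto_mu_real_initSeg_mem {S : Set (List Bool)} (hS : UpClosed S) :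
    Tendsto (fun n => mu.real {X | initSeg X n ∈ S}) atTop (𝓝 (mu.real (cyl S))) := by
  rw [cyl_eq_iUnion]
  exact (ENNReal.tendsto_toReal (measure_ne_top _ _)).comp
    (tendsto_measure_iUnion_atTop hS.monotone_initSeg_mem)

theorem LeftCe.mu_real_cyl {α : Type*} [Primcodable α] {p : α × List Bool → Prop}
    (hp : REPred p) : LeftCe fun a => mu.real (cyl {σ | p (a, σ)}) := by
  obtain ⟨S, hS, hup, hcyl⟩ := exists_primrec_upClosed_cyl_eq hp
  refine ⟨fun a n => ((strings n).filter (· ∈ S a)).length, ?_, fun a => ?_⟩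
  · exact Primrec.list_length.comp (hS.swap.listFilter.comp
      (primrec_strings.comp Primrec.snd) Primrec.fst)
  · simp only [← mu_real_initSeg_mem, ← hcyl]
    exact ⟨fun m n h => measureReal_mono ((hup a).monotone_initSeg_mem h),
      (hup a).tendsto_mu_real_initSeg_mem⟩

/-! ### The cutoff functions `x ↦ (max 1 (c * x))⁻¹` -/

theorem mul_inv_max_one {x c : ℝ} (hx : 0 ≤ x) (hc : 0 < c) :
    x * (max 1 (c * x))⁻¹ = min x (1 / c) := by
  rcases le_total (c * x) 1 with h | h
  · rw [max_eq_left h, inv_one, mul_one, min_eq_left ((le_div_iff₀' hc).2 h)]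
  · have hx0 : x ≠ 0 := by
      rintro rfl
      norm_num at h
    rw [max_eq_right h, min_eq_right ((div_le_iff₀' hc).2 h)]
    field_simp

theorem tendsto_inv_max_one {x : ℝ} (hx : 0 ≤ x) :
    Tendsto (fun k : ℕ => (max 1 (2 ^ k * x))⁻¹) atTop (𝓝 (if x = 0 then 1 else 0)) := by
  split_ifs with h
  · simp [h]
  · exact tendsto_inv_atTop_zero.comp (tendsto_atTop_mono (fun k => le_max_right _ _)
      ((tendsto_pow_atTop_atTop_of_one_lt one_lt_two).atTop_mul_const (hx.lt_of_ne' h)))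

theorem continuous_inv_max_one (c : ℝ) : Continuous fun x : ℝ => (max 1 (c * x))⁻¹ :=
  (by fun_prop : Continuous fun x : ℝ => max 1 (c * x)).inv₀ fun x =>
    (zero_lt_one.trans_le (le_max_left 1 (c * x))).ne'

theorem norm_inv_max_one_le (x : ℝ) : ‖(max 1 x)⁻¹‖ ≤ 1 := by
  rw [norm_inv, Real.norm_of_nonneg (zero_le_one.trans (le_max_left 1 x))]
  exact inv_le_one_of_one_le₀ (le_max_left 1 x)

/-! ### Functionals on Cantor space -/

/-- A partial computable functional on Cantor space, presented by an enumerable set of axioms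
`Forces σ τ`: on every input extending `σ`, the output extends `τ`. Both oracle machines and
monotone machines induce such functionals. -/
structure Functional where
  /-- The input string `σ` determines the initial segment `τ` of the output. -/
  Forces (σ τ : List Bool) : Prop
  rePred : REPred fun p : List Bool × List Bool => Forces p.1 p.2
  forces_of_isPrefix : ∀ ⦃σ τ τ'⦄, τ' <+: τ → Forces σ τ → Forces σ τ'
  compatible : ∀ ⦃σ σ' τ τ'⦄, σ <+: σ' → Forces σ τ → Forces σ' τ' → Compatible τ τ'

namespace Functional

variable (Φ : Functional)

/-- The open class of the inputs on which the output extends `τ`. -/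
def preimage (τ : List Bool) : Set Cantor := cyl {σ | Φ.Forces σ τ}

/-- The output on the input `X` is the stream `g`. -/
def Maps (X g : Cantor) : Prop := ∀ k, X ∈ Φ.preimage (initSeg g k)

/-- The class of the inputs on which the output is infinite. -/
def domain : Set Cantor := {X | ∃ g, Φ.Maps X g}

variable {Φ} {X g : Cantor} {τ τ' : List Bool}

theorem measurableSet_preimage (τ : List Bool) : MeasurableSet (Φ.preimage τ) :=
  measurableSet_cyl _

theorem preimage_subset_preimage (h : τ' <+: τ) : Φ.preimage τ ⊆ Φ.preimage τ' :=
  fun _ ⟨n, hn⟩ => ⟨n, Φ.forces_of_isPrefix h hn⟩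

theorem prefix_of_mem_preimage (h : X ∈ Φ.preimage τ) (h' : X ∈ Φ.preimage τ')
    (hle : τ.length ≤ τ'.length) : τ <+: τ' := by
  obtain ⟨⟨m, hm⟩, ⟨n, hn⟩⟩ := And.intro h h'
  have hcompat : Compatible τ τ' := by
    rcases le_total m n with hmn | hmn
    · exact Φ.compatible (initSeg_prefix_initSeg X hmn) hm hn
    · exact (Φ.compatible (initSeg_prefix_initSeg X hmn) hn hm).symm
  exact hcompat.elim id fun h => (h.eq_of_length_le hle).symm ▸ List.prefix_rfl

theorem eq_of_mem_preimage (h : X ∈ Φ.preimage τ) (h' : X ∈ Φ.preimage τ')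
    (hlen : τ.length = τ'.length) : τ = τ' :=
  (prefix_of_mem_preimage h h' hlen.le).eq_of_length hlen

theorem mem_domain_iff : X ∈ Φ.domain ↔ ∀ k, ∃ τ, τ.length = k ∧ X ∈ Φ.preimage τ := by
  refine ⟨fun ⟨g, hg⟩ k => ⟨initSeg g k, length_initSeg g k, hg k⟩, fun h => ?_⟩
  choose τ hlen hτ using h
  refine ⟨fun n => (τ (n + 1)).getD n false, fun k => ?_⟩
  convert hτ k
  refine List.ext_getElem (by simp [hlen]) fun i hi _ => ?_
  rw [length_initSeg] at hi
  have hpre : τ (i + 1) <+: τ k :=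
    prefix_of_mem_preimage (hτ _) (hτ _) (by rw [hlen, hlen]; exact hi)
  have hlt : i < (τ (i + 1)).length := by simp [hlen]
  simp [initSeg, List.getElem?_eq_getElem hlt, hpre.getElem hlt]

theorem Maps.unique {g' : Cantor} (h : Φ.Maps X g) (h' : Φ.Maps X g') : g = g' := by
  ext n
  have hseg : initSeg g (n + 1) = initSeg g' (n + 1) := eq_of_mem_preimage (h _) (h' _) (by simp)
  rw [initSeg_succ, initSeg_succ, List.append_singleton_inj] at hseg
  exact hseg.2

variable (Φ) in
/-- The value of `f` at the length-`m` initial segment of the output on `X`, and `0` if the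
output is shorter. -/
noncomputable def evalOutput (f : List Bool → ℝ) (m : ℕ) (X : Cantor) : ℝ :=
  ∑ τ ∈ (strings m).toFinset, (Φ.preimage τ).indicator (fun _ => f τ) X

theorem evalOutput_of_mem_preimage (f : List Bool → ℝ) (h : X ∈ Φ.preimage τ) :
    Φ.evalOutput f τ.length X = f τ := by
  rw [evalOutput, Finset.sum_eq_single τ, Set.indicator_of_mem h]
  · intro τ' hτ' hne
    refine Set.indicator_of_notMem (fun h' => hne (eq_of_mem_preimage h' h ?_)) _
    exact mem_strings.1 (List.mem_toFinset.1 hτ')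
  · intro hτ
    exact absurd (List.mem_toFinset.2 (mem_strings.2 rfl)) hτ

theorem Maps.evalOutput_eq (h : Φ.Maps X g) (f : List Bool → ℝ) (m : ℕ) :
    Φ.evalOutput f m X = f (initSeg g m) := by
  simpa using evalOutput_of_mem_preimage f (h m)

theorem evalOutput_eq_zero (f : List Bool → ℝ) {m : ℕ}
    (h : ∀ τ, τ.length = m → X ∉ Φ.preimage τ) : Φ.evalOutput f m X = 0 :=
  Finset.sum_eq_zero fun τ hτ =>
    Set.indicator_of_notMem (h τ (mem_strings.1 (List.mem_toFinset.1 hτ))) _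

theorem eventually_evalOutput_eq_zero (f : List Bool → ℝ) (h : X ∉ Φ.domain) :
    ∀ᶠ m in atTop, Φ.evalOutput f m X = 0 := by
  rw [mem_domain_iff] at h
  push Not at h
  obtain ⟨k, hk⟩ := h
  filter_upwards [eventually_ge_atTop k] with m hm
  refine evalOutput_eq_zero f fun τ hτ hX => hk (τ.take k) (by simp; omega) ?_
  exact preimage_subset_preimage (List.take_prefix _ _) hX

theorem measurable_evalOutput (f : List Bool → ℝ) (m : ℕ) : Measurable (Φ.evalOutput f m) :=
  Finset.measurable_fun_sum _ fun τ _ =>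
    measurable_const.indicator (measurableSet_preimage τ)

theorem norm_evalOutput_le {f : List Bool → ℝ} {C : ℝ} (hf : ∀ τ, ‖f τ‖ ≤ C) (m : ℕ)
    (X : Cantor) : ‖Φ.evalOutput f m X‖ ≤ C := by
  by_cases h : ∃ τ, τ.length = m ∧ X ∈ Φ.preimage τ
  · obtain ⟨τ, rfl, hτ⟩ := h
    rw [evalOutput_of_mem_preimage f hτ]
    exact hf τ
  · push Not at h
    rw [evalOutput_eq_zero f h, norm_zero]
    exact (norm_nonneg _).trans (hf [])

/-! ### The output distribution -/

variable (Φ) in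
/-- The probability that the output extends `τ`. -/
noncomputable def mass (τ : List Bool) : ℝ := mu.real (Φ.preimage τ)

variable (Φ) in
/-- The probability that the output is the same stream as the output on the input `X`. It is
zero if the output on `X` is finite. -/
noncomputable def atomMass (X : Cantor) : ℝ := mu.real {Y | ∃ g, Φ.Maps X g ∧ Φ.Maps Y g}

variable (Φ) in
/-- The class of the inputs on which the output is a stream of probability zero. -/
def diffuse : Set Cantor := {X ∈ Φ.domain | Φ.atomMass X = 0}

theorem Maps.atomMass_eq (h : Φ.Maps X g) : Φ.atomMass X = mu.real {Y | Φ.Maps Y g} :=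
  congrArg mu.real <| Set.ext fun _ =>
    ⟨fun ⟨_, hX, hY⟩ => h.unique hX ▸ hY, fun hY => ⟨g, h, hY⟩⟩

theorem integral_evalOutput (f : List Bool → ℝ) (m : ℕ) :
    ∫ X, Φ.evalOutput f m X ∂mu = ∑ τ ∈ (strings m).toFinset, Φ.mass τ * f τ := by
  simp only [evalOutput]
  rw [integral_finsetSum _ fun τ _ =>
    (integrable_const _).indicator (measurableSet_preimage τ)]
  exact Finset.sum_congr rfl fun τ _ => integral_indicator_const _ (measurableSet_preimage τ)

theorem tendsto_mass_initSeg (g : Cantor) :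
    Tendsto (fun m => Φ.mass (initSeg g m)) atTop (𝓝 (mu.real {Y | Φ.Maps Y g})) := by
  have hinter : {Y | Φ.Maps Y g} = ⋂ m, Φ.preimage (initSeg g m) := by
    ext Y
    simp [Maps]
  rw [hinter]
  exact (ENNReal.tendsto_toReal (measure_ne_top _ _)).comp (tendsto_measure_iInter_atTop
    (fun m => (measurableSet_preimage _).nullMeasurableSet)
    (fun m n h => preimage_subset_preimage (initSeg_prefix_initSeg g h))
    ⟨0, measure_ne_top _ _⟩)

theorem tendsto_evalOutput {φ : ℝ → ℝ} (hφ : Continuous φ) (X : Cantor) :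
    Tendsto (fun m => Φ.evalOutput (fun τ => φ (Φ.mass τ)) m X) atTop
      (𝓝 (Φ.domain.indicator (fun X => φ (Φ.atomMass X)) X)) := by
  by_cases h : X ∈ Φ.domain
  · obtain ⟨g, hg⟩ := h
    rw [Set.indicator_of_mem (show X ∈ Φ.domain from ⟨g, hg⟩), hg.atomMass_eq]
    simp only [hg.evalOutput_eq]
    exact (hφ.tendsto _).comp (tendsto_mass_initSeg g)
  · rw [Set.indicator_of_notMem h]
    exact tendsto_const_nhds.congr' (EventuallyEq.symm (eventually_evalOutput_eq_zero _ h))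

theorem measurable_indicator_atomMass {φ : ℝ → ℝ} (hφ : Continuous φ) :
    Measurable (Φ.domain.indicator fun X => φ (Φ.atomMass X)) :=
  measurable_of_tendsto_metrizable (fun m => measurable_evalOutput _ m)
    (tendsto_pi_nhds.2 (tendsto_evalOutput hφ))

theorem measurableSet_domain : MeasurableSet Φ.domain :=
  (measurable_indicator_const_iff (1 : ℝ)).1 (measurable_indicator_atomMass continuous_const)

theorem measurableSet_diffuse : MeasurableSet Φ.diffuse := by
  have hdiffuse : Φ.diffuse = Φ.domain ∩ Φ.domain.indicator Φ.atomMass ⁻¹' {0} :=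
    Set.ext fun X => and_congr_right fun hX => by simp [Set.indicator_of_mem hX]
  rw [hdiffuse]
  exact measurableSet_domain.inter
    (measurable_indicator_atomMass continuous_id (measurableSet_singleton 0))

theorem tendsto_sum_mass {φ : ℝ → ℝ} (hφ : Continuous φ) {C : ℝ} (hC : ∀ x, ‖φ x‖ ≤ C) :
    Tendsto (fun m => ∑ τ ∈ (strings m).toFinset, Φ.mass τ * φ (Φ.mass τ)) atTop
      (𝓝 (∫ X in Φ.domain, φ (Φ.atomMass X) ∂mu)) := by
  simp only [← integral_evalOutput fun τ => φ (Φ.mass τ)]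
  rw [← integral_indicator measurableSet_domain]
  exact tendsto_integral_of_dominated_convergence (fun _ => C)
    (fun m => (measurable_evalOutput _ m).aestronglyMeasurable) (integrable_const _)
    (fun m => Eventually.of_forall fun X => norm_evalOutput_le (fun τ => hC _) m X)
    (Eventually.of_forall (tendsto_evalOutput hφ))

/-! ### Right cuts of the domain and of the diffuse part -/

theorem leftCe_mass : LeftCe Φ.mass :=
  LeftCe.mu_real_cyl (p := fun x : List Bool × List Bool => Φ.Forces x.2 x.1)
    ((rePred_comp Φ.rePred (Computable.snd.pair Computable.fst)).of_eq fun _ => Iff.rfl)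

theorem hasSigma2RightCut_domain : HasSigma2RightCut (mu.real Φ.domain) := by
  have hsum : LeftCe fun x : ℕ × ℕ => ∑ τ ∈ (strings x.2).toFinset, Φ.mass τ :=
    LeftCe.sum (r := fun z : (ℕ × ℕ) × List Bool => Φ.mass z.2) (leftCe_mass.comp Primrec.snd)
      (primrec_strings.comp Primrec.snd) fun x => nodup_strings x.2
  refine LeftCe.hasSigma2RightCut_of_isGLB hsum (L := fun _ => mu.real Φ.domain) (fun _ => ?_) ?_
  · simpa using tendsto_sum_mass (Φ := Φ) (continuous_const (y := (1 : ℝ))) (fun _ => le_rfl)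
  · rw [Set.range_const]
    exact isGLB_singleton

variable (Φ) in
theorem tendsto_sum_min_mass (k : ℕ) :
    Tendsto (fun m => ∑ τ ∈ (strings m).toFinset, min (Φ.mass τ) (1 / 2 ^ k)) atTop
      (𝓝 (∫ X in Φ.domain, (max 1 (2 ^ k * Φ.atomMass X))⁻¹ ∂mu)) := by
  simp only [← mul_inv_max_one measureReal_nonneg (pow_pos (zero_lt_two' ℝ) k), mass]
  exact tendsto_sum_mass (continuous_inv_max_one _) fun x => norm_inv_max_one_le _

variable (Φ) in
theorem tendsto_setIntegral_inv_max_one :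
    Tendsto (fun k : ℕ => ∫ X in Φ.domain, (max 1 (2 ^ k * Φ.atomMass X))⁻¹ ∂mu) atTop
      (𝓝 (mu.real Φ.diffuse)) := by
  rw [← integral_indicator_one measurableSet_diffuse]
  simp only [← integral_indicator measurableSet_domain]
  refine tendsto_integral_of_dominated_convergence (fun _ => 1)
    (fun k => (measurable_indicator_atomMass (continuous_inv_max_one _)).aestronglyMeasurable)
    (integrable_const _) (fun k => Eventually.of_forall fun X =>
      (norm_indicator_le_norm_self _ X).trans (norm_inv_max_one_le _))
    (Eventually.of_forall fun X => ?_)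
  by_cases hX : X ∈ Φ.domain
  · simpa [Set.indicator, hX, diffuse] using
      tendsto_inv_max_one (x := Φ.atomMass X) measureReal_nonneg
  · simp [Set.indicator, hX, diffuse]

theorem hasSigma2RightCut_diffuse : HasSigma2RightCut (mu.real Φ.diffuse) := by
  have hsum : LeftCe fun x : ℕ × ℕ =>
      ∑ τ ∈ (strings x.2).toFinset, min (Φ.mass τ) (1 / 2 ^ x.1) :=
    LeftCe.sum (r := fun z : (ℕ × ℕ) × List Bool => min (Φ.mass z.2) (1 / 2 ^ z.1.1))
      ((leftCe_mass.comp Primrec.snd).min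
        (LeftCe.one_div_two_pow.comp (Primrec.fst.comp Primrec.fst)))
      (primrec_strings.comp Primrec.snd) fun x => nodup_strings x.2
  refine LeftCe.hasSigma2RightCut_of_isGLB hsum Φ.tendsto_sum_min_mass
    (isGLB_of_tendsto_atTop (fun j k hjk => ?_) Φ.tendsto_setIntegral_inv_max_one)
  refine le_of_tendsto_of_tendsto' (Φ.tendsto_sum_min_mass k) (Φ.tendsto_sum_min_mass j)
    fun m => Finset.sum_le_sum fun τ _ => min_le_min_left _ ?_
  exact one_div_pow_le_one_div_pow_of_le one_le_two hjk

theorem not_nRandom_three_domain_diff {Φ' : Functional} (h : Φ'.domain ⊆ Φ.domain) :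
    ¬ NRandom 3 (mu.real (Φ.domain \ Φ'.domain)) := by
  rw [measureReal_sdiff h measurableSet_domain]
  exact not_nRandom_three_sub hasSigma2RightCut_domain hasSigma2RightCut_domain

/-! ### Computable outputs -/

theorem mass_add_mass_le (h : τ <+: τ') {ρ : List Bool} (hρ : τ <+: ρ)
    (hlen : τ'.length = ρ.length) (hne : τ' ≠ ρ) : Φ.mass τ' + Φ.mass ρ ≤ Φ.mass τ := by
  have hdisj : Disjoint (Φ.preimage τ') (Φ.preimage ρ) :=
    Set.disjoint_left.2 fun Y hY hY' => hne (eq_of_mem_preimage hY hY' hlen)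
  rw [mass, mass, ← measureReal_union hdisj (measurableSet_preimage ρ)]
  exact measureReal_mono
    (Set.union_subset (preimage_subset_preimage h) (preimage_subset_preimage hρ))

theorem measureReal_maps_le_mass (g : Cantor) (n : ℕ) :
    mu.real {Y | Φ.Maps Y g} ≤ Φ.mass (initSeg g n) :=
  measureReal_mono fun _ hY => hY n

theorem eq_initSeg_of_lt_mass {n : ℕ} {c : ℝ} (hn : Φ.mass (initSeg g n) < 2 * c)
    (hc : c < mu.real {Y | Φ.Maps Y g}) (hpre : initSeg g n <+: τ) (hτ : c < Φ.mass τ) :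
    τ = initSeg g τ.length := by
  by_contra hne
  have hle : n ≤ τ.length := by simpa using hpre.length_le
  have hadd := mass_add_mass_le (Φ := Φ) hpre (initSeg_prefix_initSeg g hle) (by simp) hne
  linarith [measureReal_maps_le_mass (Φ := Φ) g τ.length]

theorem computable_of_measureReal_maps_pos (hg : 0 < mu.real {Y | Φ.Maps Y g}) :
    Computable g := by
  obtain ⟨c, hc, hcg⟩ := Frac.exists_between (half_lt_self hg)
  obtain ⟨n, hn⟩ := ((tendsto_mass_initSeg g).eventually_lt_const
    (show mu.real {Y | Φ.Maps Y g} < 2 * c.toReal by linarith)).exists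
  refine computable_of_rePred_eq fun b => ?_
  have hmass : REPred fun x : ℕ × List Bool => c.toReal < Φ.mass x.2 :=
    (rePred_comp leftCe_mass.rePred_lt (Computable.snd.pair (Computable.const c))).of_eq
      fun _ => Iff.rfl
  have hbit : REPred fun x : ℕ × List Bool => x.2.take n = initSeg g n ∧ x.2[x.1]? = some b :=
    rePred_of_primrecPred (.and
      (Primrec.eq.comp (Primrec.list_take.comp (Primrec.const n) Primrec.snd) (Primrec.const _))
      (Primrec.eq.comp (Primrec.list_getElem?.comp Primrec.snd Primrec.fst) (Primrec.const _)))
  refine (rePred_exists (rePred_and hmass hbit)).of_eq fun i => ⟨?_, fun hi => ?_⟩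
  · rintro ⟨τ, hτ, htake, hb⟩
    rw [eq_initSeg_of_lt_mass hn hcg (htake ▸ List.take_prefix n τ) hτ] at hb
    obtain ⟨hlt, hb⟩ := List.getElem?_eq_some_iff.1 hb
    simpa [initSeg] using hb
  · exact ⟨initSeg g (max n (i + 1)), hcg.trans_le (measureReal_maps_le_mass g _),
      take_initSeg g (le_max_left _ _), by simp [initSeg, hi]⟩

theorem ae_eq_diff_diffuse :
    ({X | ∃ g, Computable g ∧ Φ.Maps X g} : Set Cantor) =ᵐ[mu] (Φ.domain \ Φ.diffuse : Set _) := by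
  have hnull : mu (⋃ g ∈ {g : Cantor | Computable g ∧ mu {Y | Φ.Maps Y g} = 0},
      {Y | Φ.Maps Y g}) = 0 :=
    (measure_biUnion_null_iff (countable_setOf_computable.mono fun _ hg => hg.1)).2
      fun _ hg => hg.2
  filter_upwards [measure_eq_zero_iff_ae_notMem.1 hnull] with X hX
  refine propext ⟨fun ⟨g, hg, hXg⟩ => ⟨⟨g, hXg⟩, fun hdiff => hX ?_⟩, fun ⟨⟨g, hXg⟩, hdiff⟩ => ?_⟩
  · refine Set.mem_biUnion (x := g) ⟨hg, ?_⟩ hXg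
    rw [← measureReal_eq_zero_iff, ← hXg.atomMass_eq]
    exact hdiff.2
  · refine ⟨g, computable_of_measureReal_maps_pos (Φ := Φ) ?_, hXg⟩
    rw [← hXg.atomMass_eq]
    exact measureReal_nonneg.lt_of_ne' fun h => hdiff ⟨⟨g, hXg⟩, h⟩

variable (Φ) in
theorem not_nRandom_three_computable_output :
    ¬ NRandom 3 (mu.real {X | ∃ g, Computable g ∧ Φ.Maps X g}) := by
  rw [measureReal_congr ae_eq_diff_diffuse,
    measureReal_sdiff (fun X hX => hX.1) measurableSet_diffuse]
  exact not_nRandom_three_sub hasSigma2RightCut_domain hasSigma2RightCut_diffuse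

end Functional

/-! ### Counting the zeros of the output -/

theorem Compatible.of_isPrefix {σ σ' τ τ' : List Bool} (h : Compatible τ τ') (hσ : σ <+: τ)
    (hσ' : σ' <+: τ') : Compatible σ σ' :=
  h.elim (fun h => List.prefix_or_prefix_of_prefix (hσ.trans h) hσ')
    fun h => List.prefix_or_prefix_of_prefix hσ (hσ'.trans h)

theorem primrecRel_isPrefix {α : Type*} [Primcodable α] :
    PrimrecRel fun σ τ : List α => σ <+: τ :=
  (Primrec.eq.comp Primrec.fst
    (Primrec.list_take.comp (Primrec.list_length.comp Primrec.fst) Primrec.snd)).of_eq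
    fun _ => List.prefix_iff_eq_take.symm

theorem length_filter_initSeg (g : Cantor) (n : ℕ) :
    ((initSeg g n).filter fun b => !b).length = Nat.count (fun k => g k = false) n := by
  rw [initSeg, Nat.count, ← List.countP_eq_length_filter, List.countP_map]
  congr 1
  ext k
  simp

namespace Functional

/-- The functional that outputs a zero for every zero output by `Φ`, so that its output is
infinite if and only if the output of `Φ` has infinitely many zeros. -/
def zeros (Φ : Functional) : Functional where
  Forces σ ρ := ∃ τ, Φ.Forces σ τ ∧ ρ <+: τ.filter fun b => !b
  rePred := by
    have hfilter : Primrec fun τ : List Bool => τ.filter fun b => !b :=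
      (Primrec.listFilter (p := fun b : Bool => b = false)
        (Primrec.eq.comp Primrec.id (Primrec.const false))).of_eq fun τ => by
          congr 1
          funext b
          cases b <;> simp
    have hforces : REPred fun z : (List Bool × List Bool) × List Bool => Φ.Forces z.1.1 z.2 :=
      (rePred_comp Φ.rePred ((Computable.fst.comp Computable.fst).pair Computable.snd)).of_eq
        fun _ => Iff.rfl
    exact rePred_exists (rePred_and hforces (rePred_of_primrecPred
      (primrecRel_isPrefix.comp (Primrec.snd.comp Primrec.fst) (hfilter.comp Primrec.snd))))
  forces_of_isPrefix := fun _ _ _ h ⟨τ, hτ, hρ⟩ => ⟨τ, hτ, h.trans hρ⟩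
  compatible := fun _ _ _ _ h ⟨_, hτ, hρ⟩ ⟨_, hτ', hρ'⟩ =>
    Compatible.of_isPrefix ((Φ.compatible h hτ hτ').imp (·.filter _) (·.filter _)) hρ hρ'

variable {Φ : Functional} {X g : Cantor}

theorem mem_preimage_zeros {ρ : List Bool} :
    X ∈ Φ.zeros.preimage ρ ↔ ∃ τ, X ∈ Φ.preimage τ ∧ ρ <+: τ.filter fun b => !b :=
  ⟨fun ⟨n, τ, hτ, hρ⟩ => ⟨τ, ⟨n, hτ⟩, hρ⟩, fun ⟨τ, ⟨n, hτ⟩, hρ⟩ => ⟨n, τ, hτ, hρ⟩⟩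

theorem domain_zeros_subset : Φ.zeros.domain ⊆ Φ.domain := by
  intro X hX
  refine mem_domain_iff.2 fun k => ?_
  obtain ⟨ρ, rfl, hρ⟩ := mem_domain_iff.1 hX k
  obtain ⟨τ, hτ, hpre⟩ := mem_preimage_zeros.1 hρ
  exact ⟨τ.take ρ.length,
    List.length_take_of_le (hpre.length_le.trans (List.length_filter_le _ _)),
    preimage_subset_preimage (List.take_prefix _ _) hτ⟩

theorem Maps.eq_initSeg {τ : List Bool} (hg : Φ.Maps X g) (hτ : X ∈ Φ.preimage τ) :
    τ = initSeg g τ.length :=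
  eq_of_mem_preimage hτ (hg _) (length_initSeg _ _).symm

theorem Maps.mem_domain_zeros_iff (hg : Φ.Maps X g) :
    X ∈ Φ.zeros.domain ↔ ∃ᶠ k in atTop, g k = false := by
  rw [Nat.frequently_atTop_iff_infinite, mem_domain_iff]
  constructor
  · intro h hfin
    obtain ⟨ρ, hlen, hρ⟩ := h (hfin.toFinset.card + 1)
    obtain ⟨τ, hτ, hpre⟩ := mem_preimage_zeros.1 hρ
    have hle := hpre.length_le
    rw [hg.eq_initSeg hτ, length_filter_initSeg, hlen] at hle
    exact (hle.trans (Nat.count_le_card hfin _)).not_gt (Nat.lt_succ_self _)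
  · intro hinf k
    set n := Nat.nth (fun k => g k = false) k
    refine ⟨(initSeg g n).filter fun b => !b, ?_,
      mem_preimage_zeros.2 ⟨_, hg n, List.prefix_rfl⟩⟩
    rw [length_filter_initSeg, Nat.count_nth_of_infinite hinf]

variable (Φ) in
theorem domain_diff_domain_zeros :
    Φ.domain \ Φ.zeros.domain = {X | ∃ g, Φ.Maps X g ∧ ∀ᶠ k in atTop, g k = true} := by
  have hcofinite {X g} (hg : Φ.Maps X g) :
      X ∉ Φ.zeros.domain ↔ ∀ᶠ k in atTop, g k = true := by
    simp [hg.mem_domain_zeros_iff]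
  ext X
  exact ⟨fun ⟨⟨g, hg⟩, hX⟩ => ⟨g, hg, (hcofinite hg).1 hX⟩,
    fun ⟨g, hg, hX⟩ => ⟨⟨g, hg⟩, (hcofinite hg).2 hX⟩⟩

variable (Φ) in
theorem not_nRandom_three_cofinite_output :
    ¬ NRandom 3 (mu.real {X | ∃ g, Φ.Maps X g ∧ ∀ᶠ k in atTop, g k = true}) := by
  rw [← domain_diff_domain_zeros]
  exact not_nRandom_three_domain_diff domain_zeros_subset

end Functional

/-! ### Monotone machines -/

namespace MonoMachine

variable (N : MonoMachine)

/-- The functional computed by a monotone machine. -/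
def functional : Functional where
  Forces σ τ := ∃ a ∈ N.f σ, τ <+: a
  rePred := rePred_bind (N.partrec.comp Computable.fst) (rePred_of_primrecPred
    (primrecRel_isPrefix.comp (Primrec.snd.comp Primrec.fst) Primrec.snd))
  forces_of_isPrefix := fun _ _ _ h ⟨a, ha, hτ⟩ => ⟨a, ha, h.trans hτ⟩
  compatible := fun _ _ _ _ h ⟨_, ha, hτ⟩ ⟨_, ha', hτ'⟩ =>
    Compatible.of_isPrefix (Or.inl (N.mono h ha ha')) hτ hτ'

variable {N} {X g : Cantor}

theorem domain_functional : N.functional.domain = MonoINF N := by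
  ext X
  rw [Functional.mem_domain_iff]
  constructor
  · intro h k
    obtain ⟨τ, rfl, n, a, ha, hτ⟩ := h k
    exact ⟨n, a, ha, hτ.length_le⟩
  · intro h k
    obtain ⟨n, a, ha, hk⟩ := h k
    exact ⟨a.take k, List.length_take_of_le hk, n, a, ha, List.take_prefix _ _⟩

theorem hasBit_iff_of_maps (hg : N.functional.Maps X g) (k : ℕ) (b : Bool) :
    N.hasBit X k b ↔ g k = b := by
  constructor
  · rintro ⟨n, a, ha, hb⟩
    rw [hg.eq_initSeg ⟨n, a, ha, List.prefix_rfl⟩] at hb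
    obtain ⟨_, hb⟩ := List.getElem?_eq_some_iff.1 hb
    simpa [initSeg] using hb
  · rintro rfl
    obtain ⟨n, _, ha, u, rfl⟩ := hg (k + 1)
    exact ⟨n, _, ha, by rw [List.getElem?_append_left (by simp)]; simp [initSeg]⟩

variable (N) in
theorem cofinite_output_eq : {X | X ∈ MonoINF N ∧ ∃ t, ∀ k, t ≤ k → N.hasBit X k true} =
    {X | ∃ g, N.functional.Maps X g ∧ ∀ᶠ k in atTop, g k = true} := by
  ext X
  simp only [← domain_functional, Functional.domain, Set.mem_ofPred_eq, ← exists_and_right,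
    eventually_atTop]
  exact exists_congr fun g => and_congr_right fun hg => by
    simp only [hasBit_iff_of_maps hg]

variable (N) in
theorem computable_output_eq :
    {X | X ∈ MonoINF N ∧ ∃ g : ℕ → Bool, Computable g ∧ ∀ k, N.hasBit X k (g k)} =
      {X | ∃ g, Computable g ∧ N.functional.Maps X g} := by
  ext X
  rw [← domain_functional]
  constructor
  · rintro ⟨⟨g', hg'⟩, g, hg, hbit⟩
    obtain rfl : g' = g := funext fun k => (hasBit_iff_of_maps hg' k _).1 (hbit k)
    exact ⟨g', hg, hg'⟩
  · rintro ⟨g, hg, hmaps⟩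
    exact ⟨⟨g, hmaps⟩, g, hg, fun k => (hasBit_iff_of_maps hmaps k _).2 rfl⟩

end MonoMachine

/-! ### Oracle machines -/

open OmegaCompletePartialOrder OmegaCompletePartialOrder.ContinuousHom

/-- Evaluation of an oracle code with a partial oracle. -/
def CodeO.evalPartial (O : ℕ → Part ℕ) : CodeO → ℕ → Part ℕ
  | .zero => fun _ => Part.some 0
  | .succ => fun n => Part.some n.succ
  | .left => fun n => Part.some n.unpair.1
  | .right => fun n => Part.some n.unpair.2
  | .oracle => O
  | .pair cf cg => fun n => Nat.pair <$> cf.evalPartial O n <*> cg.evalPartial O n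
  | .comp cf cg => fun n => cg.evalPartial O n >>= cf.evalPartial O
  | .prec cf cg =>
    Nat.unpaired fun a n =>
      n.rec (cf.evalPartial O a) fun y IH => do
        let i ← IH
        cg.evalPartial O (Nat.pair a (Nat.pair y i))
  | .rfind' cf =>
    Nat.unpaired fun a m =>
      (Nat.rfind fun n => (fun m => m = 0) <$> cf.evalPartial O (Nat.pair a (n + m))).map (· + m)

theorem CodeO.evalPartial_some (O : ℕ → ℕ) (c : CodeO) :
    c.evalPartial (fun n => Part.some (O n)) = c.eval O := by
  induction c with
  | zero | succ | left | right | oracle => rfl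
  | pair cf cg hf hg | comp cf cg hf hg | prec cf cg hf hg =>
    simp only [evalPartial, eval, hf, hg]
  | rfind' cf hf =>
    simp only [evalPartial, eval, hf]

theorem ωScottContinuous_rfind {α : Type*} [OmegaCompletePartialOrder α] {f : α → ℕ → Part Bool}
    (hf : ωScottContinuous f) : ωScottContinuous fun x => Nat.rfind (f x) := by
  have hmono : Monotone fun x => Nat.rfind (f x) := fun x y hxy n hn =>
    have ⟨htrue, hfalse⟩ := Nat.mem_rfind.1 hn
    Nat.mem_rfind.2 ⟨hf.monotone hxy n _ htrue, fun hm => hf.monotone hxy _ _ (hfalse hm)⟩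
  refine ωScottContinuous.of_monotone_map_ωSup ⟨hmono, fun c => le_antisymm (fun n hn => ?_)
    (ωSup_le _ _ fun k => hmono (le_ωSup c k))⟩
  have hstage {m b} (hb : b ∈ f (ωSup c) m) : ∃ k, b ∈ f (c k) m := by
    rw [(hf.apply₂ m).map_ωSup, Part.mem_ωSup] at hb
    obtain ⟨k, hk⟩ := hb
    exact ⟨k, Part.eq_some_iff.1 hk.symm⟩
  obtain ⟨htrue, hfalse⟩ := Nat.mem_rfind.1 hn
  obtain ⟨k, hk⟩ := hstage htrue
  choose! s hs using fun m (hm : m < n) => hstage (hfalse hm)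
  refine (Part.mem_ωSup _ _).2 ⟨max k ((Finset.range n).sup s), (Part.eq_some_iff.2 ?_).symm⟩
  refine Nat.mem_rfind.2 ⟨hf.monotone (c.monotone (le_max_left _ _)) _ _ hk, fun {m} hm => ?_⟩
  exact hf.monotone (c.monotone ((Finset.le_sup (Finset.mem_range.2 hm)).trans
    (le_max_right _ _))) _ _ (hs m hm)

theorem CodeO.ωScottContinuous_evalPartial (c : CodeO) :
    ωScottContinuous fun O => c.evalPartial O := by
  induction c with
  | zero | succ | left | right => exact .const
  | oracle => exact .id
  | pair cf cg hf hg => exact .of_apply₂ fun n =>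
      ωScottContinuous.seq (ωScottContinuous.map (hf.apply₂ n)) (hg.apply₂ n)
  | comp cf cg hf hg => exact .of_apply₂ fun n => ωScottContinuous.bind (hg.apply₂ n) hf
  | prec cf cg hf hg =>
    refine .of_apply₂ fun n => ?_
    simp only [evalPartial, Nat.unpaired]
    induction n.unpair.2 with
    | zero => exact hf.apply₂ _
    | succ y ih => exact ωScottContinuous.bind ih (.of_apply₂ fun i => hg.apply₂ _)
  | rfind' cf hf =>
    exact .of_apply₂ fun n => ωScottContinuous.map (ωScottContinuous_rfind
      (.of_apply₂ fun k => ωScottContinuous.map (hf.apply₂ _)))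

theorem partrec_natPair {α : Type*} [Primcodable α] {f g : α → Part ℕ} (hf : Partrec f)
    (hg : Partrec g) : Partrec fun a => Nat.pair <$> f a <*> g a := by
  have hpair : Computable₂ fun (x : α × ℕ) y => Nat.pair x.2 y :=
    Primrec₂.natPair.to_comp.comp (Computable.snd.comp Computable.fst) Computable.snd
  have hmap : Partrec₂ fun a x => (g a).map (Nat.pair x) :=
    Partrec.map (hg.comp Computable.fst) hpair
  exact (Partrec.bind hf hmap).of_eq fun a => Part.ext fun v => by simp [Seq.seq]

theorem partrec_rfind_eq_zero {α : Type*} [Primcodable α] {f : α → ℕ → Part ℕ} (hf : Partrec₂ f) :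
    Partrec fun a => Nat.rfind fun n => (fun m => decide (m = 0)) <$> f a n :=
  have htest : Computable fun m : ℕ => decide (m = 0) :=
    (Primrec.eq.comp Primrec.id (Primrec.const 0)).decide.to_comp.of_eq fun _ => by simp
  Partrec.rfind (Partrec.map hf (htest.comp Computable.snd))

theorem CodeO.partrec_evalPartial {α : Type*} [Primcodable α] {O : α → ℕ → Part ℕ}
    (hO : Partrec₂ O) (c : CodeO) : Partrec₂ fun a => c.evalPartial (O a) := by
  have hleft : Computable fun z : α × ℕ => z.2.unpair.1 :=
    Computable.fst.comp (Computable.unpair.comp Computable.snd)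
  have hright : Computable fun z : α × ℕ => z.2.unpair.2 :=
    Computable.snd.comp (Computable.unpair.comp Computable.snd)
  have hpair := Primrec₂.natPair.to_comp
  induction c with
  | zero => exact (Computable.const 0).partrec
  | succ => exact (Computable.succ.comp Computable.snd).partrec
  | left => exact hleft.partrec
  | right => exact hright.partrec
  | oracle => exact hO
  | pair cf cg hf hg => exact partrec_natPair hf hg
  | comp cf cg hf hg =>
    exact Partrec.bind hg (hf.comp (Computable.fst.comp Computable.fst) Computable.snd).to₂
  | prec cf cg hf hg =>
    have hstep : Partrec₂ fun (z : α × ℕ) (w : ℕ × ℕ) =>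
        cg.evalPartial (O z.1) (Nat.pair z.2.unpair.1 (Nat.pair w.1 w.2)) :=
      hg.comp (Computable.fst.comp Computable.fst) (hpair.comp (hleft.comp Computable.fst)
        (hpair.comp (Computable.fst.comp Computable.snd) (Computable.snd.comp Computable.snd)))
    exact Partrec.nat_rec hright (hf.comp Computable.fst hleft) hstep
  | rfind' cf hf =>
    have hsearch : Partrec₂ fun (z : α × ℕ) n =>
        cf.evalPartial (O z.1) (Nat.pair z.2.unpair.1 (n + z.2.unpair.2)) :=
      hf.comp (Computable.fst.comp Computable.fst) (hpair.comp (hleft.comp Computable.fst)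
        (Primrec.nat_add.to_comp.comp Computable.snd (hright.comp Computable.fst)))
    exact Partrec.map (partrec_rfind_eq_zero hsearch)
      (Primrec.nat_add.to_comp.comp Computable.snd (hright.comp Computable.fst))

/-- The partial function that sends `n` to the `n`-th bit of the string `σ`, and is undefined
beyond the length of `σ`. -/
def bitAt (σ : List Bool) : ℕ → Part ℕ := fun n => Part.ofOption (σ[n]?.map fun b => cond b 1 0)

theorem mem_bitAt {σ : List Bool} {n v : ℕ} :
    v ∈ bitAt σ n ↔ ∃ h : n < σ.length, cond σ[n] 1 0 = v := by
  simp [bitAt, List.getElem?_eq_some_iff]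

theorem mem_bitAt_initSeg {X : Cantor} {k n v : ℕ} :
    v ∈ bitAt (initSeg X k) n ↔ n < k ∧ oX X n = v := by
  simp [mem_bitAt, initSeg, oX]

theorem primrec_bitAt :
    Primrec fun z : List Bool × ℕ => z.1[z.2]?.map fun b => cond b 1 0 :=
  Primrec.option_map (Primrec.list_getElem?.comp Primrec.fst Primrec.snd)
    (Primrec.cond Primrec.snd (Primrec.const 1) (Primrec.const 0)).to₂

theorem partrec_bitAt : Partrec₂ bitAt := Computable.ofOption primrec_bitAt.to_comp

theorem rePred_mem_bitAt : REPred fun z : (List Bool × ℕ) × ℕ => z.2 ∈ bitAt z.1.1 z.1.2 :=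
  rePred_of_primrecPred <| (Primrec.eq.comp (primrec_bitAt.comp Primrec.fst)
    (Primrec.option_some.comp Primrec.snd)).of_eq fun _ => by simp [bitAt]

theorem bitAt_le_iff {τ : List Bool} {f : ℕ → Part ℕ} :
    bitAt τ ≤ f ↔ ∀ i < τ.length, ∃ v ∈ f i, v ∈ bitAt τ i := by
  refine ⟨fun h i hi => ?_, fun h i v hv => ?_⟩
  · have hv := mem_bitAt.2 ⟨hi, rfl⟩
    exact ⟨_, h i _ hv, hv⟩
  · obtain ⟨w, hw, hw'⟩ := h i (mem_bitAt.1 hv).1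
    exact Part.mem_unique hv hw' ▸ hw

theorem bitAt_le_bitAt {σ σ' : List Bool} (h : σ <+: σ') : bitAt σ ≤ bitAt σ' := by
  intro n v hv
  obtain ⟨hn, rfl⟩ := mem_bitAt.1 hv
  exact mem_bitAt.2 ⟨hn.trans_le h.length_le, by rw [h.getElem hn]⟩

theorem compatible_of_bitAt_le {τ τ' : List Bool} {f : ℕ → Part ℕ} (h : bitAt τ ≤ f)
    (h' : bitAt τ' ≤ f) : Compatible τ τ' := by
  have hagree (i) (hi : i < τ.length) (hi' : i < τ'.length) : τ[i] = τ'[i] := by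
    have hbit := Part.mem_unique (h i _ (mem_bitAt.2 ⟨hi, rfl⟩)) (h' i _ (mem_bitAt.2 ⟨hi', rfl⟩))
    cases hb : τ[i] <;> cases hb' : τ'[i] <;> simp [hb, hb'] at hbit ⊢
  refine (le_total τ.length τ'.length).imp (fun hle => ?_) (fun hle => ?_)
  · exact List.prefix_iff_getElem.2 ⟨hle, fun i hi => hagree i hi _⟩
  · exact List.prefix_iff_getElem.2 ⟨hle, fun i hi => (hagree i _ hi).symm⟩

/-- The increasing chain of the partial oracles given by the initial segments of `X`. -/
def initSegOracles (X : Cantor) : Chain (ℕ → Part ℕ) :=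
  ⟨fun k => bitAt (initSeg X k), fun _ _ h => bitAt_le_bitAt (initSeg_prefix_initSeg X h)⟩

theorem ωSup_initSegOracles (X : Cantor) :
    ωSup (initSegOracles X) = fun n => Part.some (oX X n) := by
  funext n
  refine Part.eq_some_iff.2 ((Part.mem_ωSup _ _).2 ⟨n + 1, ?_⟩)
  exact (Part.eq_some_iff.2 (mem_bitAt_initSeg.2 ⟨n.lt_succ_self, rfl⟩)).symm

/-- The use principle. -/
theorem mem_evalO_iff {X : Cantor} {c : CodeO} {n v : ℕ} :
    v ∈ evalO X c n ↔ ∃ k, v ∈ c.evalPartial (bitAt (initSeg X k)) n := by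
  rw [evalO, ← c.evalPartial_some, ← ωSup_initSegOracles,
    (c.ωScottContinuous_evalPartial.apply₂ n).map_ωSup, Part.mem_ωSup]
  exact exists_congr fun k => eq_comm.trans Part.eq_some_iff

namespace CodeO

theorem monotone_evalPartial (c : CodeO) : Monotone fun O => c.evalPartial O :=
  c.ωScottContinuous_evalPartial.monotone

/-- The functional on Cantor space computed by an oracle machine. Its output ends before the
first argument at which the machine diverges or takes a value other than `0` and `1`. -/
def functional (c : CodeO) : Functional where
  Forces σ τ := bitAt τ ≤ c.evalPartial (bitAt σ)
  rePred := by
    have hvalue : REPred fun z : (List Bool × List Bool) × ℕ =>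
        ∃ v ∈ c.evalPartial (bitAt z.1.1) z.2, v ∈ bitAt z.1.2 z.2 := by
      have heval : Partrec fun z : (List Bool × List Bool) × ℕ =>
          c.evalPartial (bitAt z.1.1) z.2 :=
        (c.partrec_evalPartial partrec_bitAt).comp (Computable.fst.comp Computable.fst)
          Computable.snd
      have harg : Computable fun z : ((List Bool × List Bool) × ℕ) × ℕ =>
          ((z.1.1.2, z.1.2), z.2) :=
        ((Computable.snd.comp (Computable.fst.comp Computable.fst)).pair
          (Computable.snd.comp Computable.fst)).pair Computable.snd
      exact rePred_bind heval ((rePred_comp rePred_mem_bitAt harg).of_eq fun _ => Iff.rfl)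
    have hlength : Computable fun z : List Bool × List Bool => (z, z.2.length) :=
      Computable.id.pair (Computable.list_length.comp Computable.snd)
    exact (rePred_comp (rePred_forall_lt hvalue) hlength).of_eq fun _ => bitAt_le_iff.symm
  forces_of_isPrefix := fun _ _ _ h hτ => (bitAt_le_bitAt h).trans hτ
  compatible := fun _ _ _ _ h hτ hτ' =>
    compatible_of_bitAt_le (hτ.trans (c.monotone_evalPartial (bitAt_le_bitAt h))) hτ'

theorem maps_functional_iff {c : CodeO} {X g : Cantor} :
    c.functional.Maps X g ↔ ∀ n, oX g n ∈ evalO X c n := by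
  refine ⟨fun h n => ?_, fun h k => ?_⟩
  · obtain ⟨m, hm⟩ := h (n + 1)
    exact mem_evalO_iff.2 ⟨m, hm n _ (mem_bitAt_initSeg.2 ⟨n.lt_succ_self, rfl⟩)⟩
  · choose s hs using fun n => mem_evalO_iff.1 (h n)
    refine ⟨(Finset.range k).sup s, fun n v hv => ?_⟩
    obtain ⟨hn, rfl⟩ := mem_bitAt_initSeg.1 hv
    have hle : s n ≤ (Finset.range k).sup s := Finset.le_sup (Finset.mem_range.2 hn)
    exact c.monotone_evalPartial (bitAt_le_bitAt (initSeg_prefix_initSeg X hle)) n _ (hs n)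

theorem cofinite_output_eq (c : CodeO) :
    {X : Cantor | ∃ A : Set ℕ, Aᶜ.Finite ∧
      ∀ n, evalO X c n = Part.some (if n ∈ A then 1 else 0)} =
    {X | ∃ g, c.functional.Maps X g ∧ ∀ᶠ k in atTop, g k = true} := by
  ext X
  simp only [Set.mem_ofPred_eq, maps_functional_iff, Part.eq_some_iff, ← Nat.cofinite_eq_atTop,
    eventually_cofinite]
  constructor
  · rintro ⟨A, hA, h⟩
    exact ⟨fun n => decide (n ∈ A), fun n => by simpa [oX, Bool.cond_eq_ite] using h n,
      by simpa using! hA⟩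
  · rintro ⟨g, hg, h⟩
    exact ⟨{n | g n = true}, h, fun n => by
      convert hg n using 1
      simp [oX, Bool.cond_eq_ite]⟩

end CodeO

end RandProb

namespace RandProb

/-- **Limits on randomness of computable/cofinite outcomes of oracle and monotone machines.**
For any oracle machine, the probability that it computes the characteristic function of a
cofinite set is not 3-random; for any monotone machine, the probability that the output is
a stream of the form `σ∗1^ω` (respectively, a computable stream) is not 3-random. -/
theorem cofinite_outcome_not_three_random :
    (∀ c : CodeO,
        ¬ NRandom 3 (muR {X : Cantor | ∃ A : Set ℕ, Aᶜ.Finite ∧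
          ∀ n, evalO X c n = Part.some (if n ∈ A then 1 else 0)})) ∧
    (∀ N : MonoMachine,
        ¬ NRandom 3 (muR {X : Cantor | X ∈ MonoINF N ∧
          ∃ t, ∀ k, t ≤ k → N.hasBit X k true})) ∧
    (∀ N : MonoMachine,
        ¬ NRandom 3 (muR {X : Cantor | X ∈ MonoINF N ∧
          ∃ g : ℕ → Bool, Computable g ∧ ∀ k, N.hasBit X k (g k)})) := by
  refine ⟨fun c => ?_, fun N => ?_, fun N => ?_⟩
  · rw [c.cofinite_output_eq]
    exact c.functional.not_nRandom_three_cofinite_output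
  · rw [N.cofinite_output_eq]
    exact N.functional.not_nRandom_three_cofinite_output
  · rw [N.computable_output_eq]
    exact N.functional.not_nRandom_three_computable_output

end RandProb
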